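/- arXiv:1902.07146 — 2 statements merged into one kernel-verified Lean document; each statement's English description precedes it below -/
import Mathlib

section
/- Suppose φ : Ω → ℝ is continuous, satisfies Walters' condition, and satisfies one of: (1) W_n(φ) = O(θ^n); (2) W_n(φ) = O(n^{−α}) for some α > 1; (3) W_n(φ) = O(θ₀^{(log n)^α}) for some θ₀ ∈ (0,1) and α > 1; (4) W_n(φ) = O(e^{−c n^α}) for some c > 0 and α ∈ (0,1). Let μ_φ = h·ν be the associated equilibrium state, where λ > 0, h : Ω → ℝ is strictly positive continuous, ν is a Borel probability measure, P_φ h = λ h, ∫ P_φ f dν = λ ∫ f dν for all continuous f, and ∫ h dν = 1. Then there exists a constant D > 0 such that for every ψ ∈ L_φ, every u > 0 and every n ≥ 1: μ_φ{x ∈ Ω : (1/n) S_nψ(x) − ∫ ψ dμ_φ ≥ u} ≤ exp(−n u²/(4D Lip_φ(ψ)²)). -/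
open MeasureTheory Filter Topology
open scoped ENNReal NNReal BigOperators

noncomputable section

/-- The shift map on `Ω = Aℕ`. -/
def shift {A : Type*} (x : ℕ → A) : ℕ → A := fun k => x (k + 1)

/-- Prepend a symbol `a` to `x`. -/
def cons {A : Type*} (a : A) (x : ℕ → A) : ℕ → A := fun k =>
  match k with
  | 0 => a
  | k + 1 => x k

/-- Prepend a word `a ∈ Aⁿ` to `x`. -/
def wcat {A : Type*} {n : ℕ} (a : Fin n → A) (x : ℕ → A) : ℕ → A := fun k =>
  if h : k < n then a ⟨k, h⟩ else x (k - n)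

/-- The metric `d_θ(x,y) = θ^(first disagreement)`. -/
def dtheta {A : Type*} (θ : ℝ) (x y : ℕ → A) : ℝ :=
  letI := Classical.dec (x = y)
  if x = y then 0 else θ ^ sInf {k | x k ≠ y k}

/-- `K : Ωⁿ → ℝ` is separately `d_θ`-Lipschitz with constants `ℓ i`. -/
def SepLip {A : Type*} (θ : ℝ) {n : ℕ} (K : (Fin n → (ℕ → A)) → ℝ) (ℓ : Fin n → ℝ) : Prop :=
  ∀ (x : Fin n → (ℕ → A)) (i : Fin n) (x' : ℕ → A),
    |K x - K (Function.update x i x')| ≤ ℓ i * dtheta θ (x i) x'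

/-- Gaussian concentration bound with constant `C`. -/
def GCB {A : Type*} [MeasurableSpace A] (θ C : ℝ) (μ : Measure (ℕ → A)) : Prop :=
  ∀ (n : ℕ), 1 ≤ n → ∀ (K : (Fin n → (ℕ → A)) → ℝ) (ℓ : Fin n → ℝ), SepLip θ K ℓ →
    ∫ x, Real.exp (K (fun i => shift^[(i : ℕ)] x)) ∂μ ≤
      Real.exp (∫ y, K (fun i => shift^[(i : ℕ)] y) ∂μ) * Real.exp (C * ∑ j, ℓ j ^ 2)

/-- Birkhoff sum `S_n f`. -/
def birk {A : Type*} (f : (ℕ → A) → ℝ) (n : ℕ) (x : ℕ → A) : ℝ :=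
  ∑ i ∈ Finset.range n, f (shift^[i] x)

/-- Variation `var_n(φ)` (as an extended real). -/
def evar {A : Type*} (φ : (ℕ → A) → ℝ) (n : ℕ) : ℝ≥0∞ :=
  ⨆ (x : ℕ → A) (y : ℕ → A) (_ : ∀ i < n, x i = y i), ENNReal.ofReal |φ x - φ y|

/-- `W(φ,x,y)` (as an extended real). -/
def Wpair {A : Type*} (φ : (ℕ → A) → ℝ) (x y : ℕ → A) : ℝ≥0∞ :=
  ⨆ (n : ℕ) (a : Fin n → A), ENNReal.ofReal |birk φ n (wcat a x) - birk φ n (wcat a y)|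

/-- `W_p(φ)` (as an extended real). -/
def Wp {A : Type*} (φ : (ℕ → A) → ℝ) (p : ℕ) : ℝ≥0∞ :=
  ⨆ (x : ℕ → A) (y : ℕ → A) (_ : ∀ i < p, x i = y i), Wpair φ x y

/-- Walters' condition. -/
def Walters {A : Type*} (φ : (ℕ → A) → ℝ) : Prop :=
  (⨆ (x : ℕ → A) (y : ℕ → A), Wpair φ x y) ≠ ⊤ ∧ (∀ p, 0 < Wp φ p) ∧
    Antitone (Wp φ) ∧ Tendsto (Wp φ) atTop (𝓝 0)

/-- Ruelle's transfer operator `P_φ`. -/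
def transfer {A : Type*} [Fintype A] (φ f : (ℕ → A) → ℝ) (x : ℕ → A) : ℝ :=
  ∑ a : A, Real.exp (φ (cons a x)) * f (cons a x)
/-- The seminorm `Lip_φ(ψ) = sup_n var_n(ψ)/W_n(φ)` (as an extended real). -/
def eLip {A : Type*} (φ ψ : (ℕ → A) → ℝ) : ℝ≥0∞ :=
  ⨆ n : ℕ, evar ψ n / Wp φ n


section Aux

theorem exp_le_add_exp_sq (x : ℝ) : Real.exp x ≤ x + Real.exp (x ^ 2) := by
  have h1 : x ^ 2 + 1 ≤ Real.exp (x ^ 2) := Real.add_one_le_exp _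
  rcases le_or_gt |x| 1 with hx | hx
  · have := (abs_le.1 (Real.abs_exp_sub_one_sub_id_le hx)).2
    linarith
  · rcases lt_abs.1 hx with h | h
    · have : Real.exp x ≤ Real.exp (x ^ 2) := Real.exp_le_exp.2 (by nlinarith)
      linarith
    · have : Real.exp x ≤ 1 := Real.exp_le_one_iff.2 (by linarith)
      nlinarith

theorem cons_shift {A : Type*} (a : A) (x : ℕ → A) : shift (cons a x) = x := rfl

theorem continuous_cons {A : Type*} [TopologicalSpace A] (a : A) :
    Continuous (fun x : ℕ → A => cons a x) := by
  refine continuous_pi fun k => ?_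
  cases k with
  | zero => exact continuous_const
  | succ k => exact continuous_apply k

theorem continuous_shift {A : Type*} [TopologicalSpace A] :
    Continuous (fun x : ℕ → A => shift x) :=
  continuous_pi fun k => continuous_apply (k + 1)

theorem continuous_birk {A : Type*} [TopologicalSpace A] {f : (ℕ → A) → ℝ} (hf : Continuous f)
    (n : ℕ) : Continuous (birk f n) := by
  unfold birk
  refine continuous_finsetSum _ fun i _ => hf.comp ?_
  exact continuous_shift.iterate i

theorem birk_succ' {A : Type*} (f : (ℕ → A) → ℝ) (n : ℕ) (x : ℕ → A) :
    birk f (n + 1) x = f x + birk f n (shift x) := by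
  unfold birk
  rw [Finset.sum_range_succ', add_comm]
  rfl

theorem agree_cons {A : Type*} (a : A) {x y : ℕ → A} {p : ℕ} (h : ∀ i < p, x i = y i) :
    ∀ i < p + 1, cons a x i = cons a y i := by
  intro i hi
  cases i with
  | zero => rfl
  | succ i => exact h i (by omega)

/-- continuous functions have small variation -/
theorem exists_small_var {A : Type*} [Fintype A] [TopologicalSpace A] [DiscreteTopology A]
    {f : (ℕ → A) → ℝ} (hf : Continuous f) {ε : ℝ} (hε : 0 < ε) :
    ∃ n : ℕ, ∀ x y : ℕ → A, (∀ i < n, x i = y i) → |f x - f y| < ε := by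
  have key : ∀ z : ℕ → A, ∃ n : ℕ, ∀ x ∈ PiNat.cylinder z n, |f x - f z| < ε / 2 := by
    intro z
    have ho : IsOpen (f ⁻¹' Metric.ball (f z) (ε / 2)) := Metric.isOpen_ball.preimage hf
    have hz : z ∈ f ⁻¹' Metric.ball (f z) (ε / 2) := by simp [hε]
    obtain ⟨v, ⟨w, n, rfl⟩, hzv, hv⟩ :=
      (PiNat.isTopologicalBasis_cylinders (fun _ : ℕ => A)).exists_subset_of_mem_open hz ho
    refine ⟨n, fun x hx => ?_⟩
    rw [PiNat.mem_cylinder_iff_eq] at hzv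
    rw [hzv] at hx
    have := hv hx
    simpa [Real.dist_eq] using this
  choose N hN using key
  obtain ⟨t, ht⟩ := CompactSpace.elim_nhds_subcover (fun z => PiNat.cylinder z (N z))
    (fun z => (PiNat.isOpen_cylinder (fun _ : ℕ => A) z (N z)).mem_nhds
      (PiNat.self_mem_cylinder z (N z)))
  refine ⟨t.sup N, fun x y hxy => ?_⟩
  have hx : x ∈ ⋃ z ∈ t, PiNat.cylinder z (N z) := by rw [ht]; trivial
  simp only [Set.mem_iUnion] at hx
  obtain ⟨z, hzt, hxz⟩ := hx
  have hyz : y ∈ PiNat.cylinder z (N z) := by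
    intro i hi
    rw [← hxy i (lt_of_lt_of_le hi (Finset.le_sup (f := N) hzt))]
    exact hxz i hi
  have h1 := hN z x hxz
  have h2 := hN z y hyz
  rw [abs_lt] at *
  constructor <;> linarith

/-- test function supported on a cylinder -/
def cylf {A : Type*} (φ : (ℕ → A) → ℝ) (n : ℕ) (z x : ℕ → A) : ℝ :=
  Set.indicator (PiNat.cylinder z n) (fun x => Real.exp (-birk φ n x)) x

theorem continuous_cylf {A : Type*} [TopologicalSpace A] [DiscreteTopology A]
    {φ : (ℕ → A) → ℝ} (hφ : Continuous φ) (n : ℕ) (z : ℕ → A) : Continuous (cylf φ n z) := by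
  have hcl : IsClopen (PiNat.cylinder (E := fun _ : ℕ => A) z n) := by
    refine ⟨?_, PiNat.isOpen_cylinder (fun _ : ℕ => A) z n⟩
    rw [PiNat.cylinder_eq_pi]
    exact isClosed_set_pi fun a _ => isClosed_discrete _
  exact (Real.continuous_exp.comp (continuous_birk hφ n).neg).indicator
    (by simp [hcl.frontier_eq])

theorem transfer_cylf {A : Type*} [Fintype A] (φ : (ℕ → A) → ℝ) (n : ℕ) (z x : ℕ → A) :
    transfer φ (cylf φ (n + 1) z) x = cylf φ n (shift z) x := by
  classical
  unfold transfer
  rw [Finset.sum_eq_single (z 0)]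
  · unfold cylf
    by_cases hx : x ∈ PiNat.cylinder (shift z) n
    · have : cons (z 0) x ∈ PiNat.cylinder z (n + 1) := by
        intro i hi
        cases i with
        | zero => rfl
        | succ i => exact hx i (by omega)
      rw [Set.indicator_of_mem hx, Set.indicator_of_mem this, ← Real.exp_add, birk_succ',
        cons_shift]
      congr 1; ring
    · have : cons (z 0) x ∉ PiNat.cylinder z (n + 1) := by
        intro h
        exact hx fun i hi => h (i + 1) (by omega)
      rw [Set.indicator_of_notMem hx, Set.indicator_of_notMem this, mul_zero]
  · intro b _ hb
    have : cons b x ∉ PiNat.cylinder z (n + 1) := fun h => hb (h 0 (by omega))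
    unfold cylf
    rw [Set.indicator_of_notMem this, mul_zero]
  · simp

/-- Even with an arbitrary sigma-algebra on `A`, continuous functions are ae-measurable. -/
theorem aemeas_of_continuous {A : Type*} [Fintype A] [MeasurableSpace A] [TopologicalSpace A]
    [DiscreteTopology A] {φ : (ℕ → A) → ℝ} (hφ : Continuous φ) {lam : ℝ}
    (ν : Measure (ℕ → A)) [IsProbabilityMeasure ν]
    (heig' : ∀ f : (ℕ → A) → ℝ, Continuous f → ∫ x, transfer φ f x ∂ν = lam * ∫ x, f x ∂ν)
    {f : (ℕ → A) → ℝ} (hf : Continuous f) : AEMeasurable f ν := by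
  have hne : ∀ n z, ∫ x, cylf φ n z x ∂ν ≠ 0 := by
    intro n
    induction n with
    | zero =>
      intro z
      have : ∀ x, cylf φ 0 z x = 1 := by
        intro x
        simp [cylf, birk, PiNat.cylinder_zero]
      simp [this]
    | succ n ih =>
      intro z h0
      have h1 := heig' _ (continuous_cylf hφ (n + 1) z)
      rw [h0, mul_zero] at h1
      simp_rw [transfer_cylf] at h1
      exact ih _ h1
  have hcyl : ∀ n (z : ℕ → A), NullMeasurableSet (PiNat.cylinder (E := fun _ : ℕ => A) z n) ν := by
    intro n z
    have hi : Integrable (cylf φ n z) ν := by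
      by_contra hc
      exact hne n z (integral_undef hc)
    have hm := hi.1.aemeasurable.nullMeasurable (measurableSet_singleton (0 : ℝ)).compl
    convert hm using 1
    ext x
    simp [cylf, Real.exp_ne_zero]
  refine NullMeasurable.aemeasurable ?_
  have : Nonempty (ℕ → A) := by
    by_contra hc
    rw [not_nonempty_iff] at hc
    have := measure_univ (μ := ν)
    simp [Set.eq_empty_of_isEmpty] at this
  obtain ⟨x0⟩ := this
  have hm : @Measurable (NullMeasurableSpace (ℕ → A) ν) ℝ _ _ f := by
    refine measurable_of_isOpen fun s hs => ?_
    have hU := hs.preimage hf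
    have hrep : f ⁻¹' s = ⋃ (n : ℕ) (w : Fin n → A)
        (_ : PiNat.cylinder (E := fun _ : ℕ => A) (wcat w x0) n ⊆ f ⁻¹' s),
        PiNat.cylinder (E := fun _ : ℕ => A) (wcat w x0) n := by
      ext x
      simp only [Set.mem_iUnion]
      constructor
      · intro hx
        obtain ⟨v, ⟨w, n, rfl⟩, hzv, hv⟩ :=
          (PiNat.isTopologicalBasis_cylinders (fun _ : ℕ => A)).exists_subset_of_mem_open hx hU
        have hxw : x ∈ PiNat.cylinder (E := fun _ : ℕ => A)
            (wcat (fun i : Fin n => x i) x0) n := by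
          intro i hi
          simp [wcat, hi]
        refine ⟨n, fun i => x i, ?_, hxw⟩
        rw [← PiNat.mem_cylinder_iff_eq.1 hxw, PiNat.mem_cylinder_iff_eq.1 hzv]
        exact hv
      · rintro ⟨n, w, hw, hx⟩
        exact hw hx
    have : NullMeasurableSet (f ⁻¹' s) ν := by
      rw [hrep]
      exact NullMeasurableSet.iUnion fun n => NullMeasurableSet.iUnion fun w =>
        NullMeasurableSet.iUnion fun _ => hcyl _ _
    exact this
  exact fun s hs => hm hs

theorem integrable_of_cont {A : Type*} [Fintype A] [MeasurableSpace A] [TopologicalSpace A]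
    [DiscreteTopology A] (μ : Measure (ℕ → A)) [IsFiniteMeasure μ]
    {f : (ℕ → A) → ℝ} (hf : Continuous f) (hm : AEMeasurable f μ) : Integrable f μ := by
  obtain ⟨C, hC⟩ := (isCompact_univ (X := ℕ → A)).exists_bound_of_continuousOn hf.continuousOn
  exact Integrable.of_bound hm.aestronglyMeasurable C (Eventually.of_forall fun x => hC x trivial)

/-- comparison for the eigenfunction -/
theorem h_compare {A : Type*} [Fintype A] {φ h : (ℕ → A) → ℝ} {lam : ℝ} (hlam : 0 < lam)
    (heig : ∀ x, transfer φ h x = lam * h x) (n : ℕ) : ∀ (K : ℝ) (x y : ℕ → A),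
    (∀ w : Fin n → A, Real.exp (birk φ n (wcat w x)) * h (wcat w x) ≤
      K * (Real.exp (birk φ n (wcat w y)) * h (wcat w y))) → h x ≤ K * h y := by
  induction n with
  | zero =>
    intro K x y H
    have h0 : ∀ x : ℕ → A, wcat (Fin.elim0 : Fin 0 → A) x = x := by
      intro x; funext k; simp [wcat]
    have := H Fin.elim0
    simpa [h0, birk] using this
  | succ n ih =>
    intro K x y H
    have hterm : ∀ a : A, Real.exp (φ (cons a x)) * h (cons a x) ≤
        K * (Real.exp (φ (cons a y)) * h (cons a y)) := by
      intro a
      have := ih (K * Real.exp (φ (cons a y) - φ (cons a x))) (cons a x) (cons a y) (by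
        intro w
        have hw : ∀ x : ℕ → A, wcat (Fin.snoc (α := fun _ => A) w a) x = wcat w (cons a x) := by
          intro x
          funext k
          unfold wcat
          rcases lt_trichotomy k n with hk | hk | hk
          · rw [dif_pos (by omega), dif_pos hk]
            simp [Fin.snoc, hk]
          · subst hk
            rw [dif_pos (by omega), dif_neg (by omega)]
            simp [Fin.snoc, cons]
          · rw [dif_neg (by omega), dif_neg (by omega)]
            obtain ⟨m, rfl⟩ := Nat.exists_eq_add_of_lt hk
            have e1 : n + m + 1 - (n + 1) = m := by omega
            have e2 : n + m + 1 - n = m + 1 := by omega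
            rw [e1, e2]
            rfl
        have hit : ∀ (n : ℕ) (x : ℕ → A) k, shift^[n] x k = x (k + n) := by
          intro n
          induction n with
          | zero => intro x k; rfl
          | succ n ihn =>
            intro x k
            rw [Function.iterate_succ_apply, ihn]
            show x (k + n + 1) = _
            rfl
        have hb : ∀ x : ℕ → A, birk φ (n + 1) (wcat w (cons a x)) =
            birk φ n (wcat w (cons a x)) + φ (cons a x) := by
          intro x
          unfold birk
          rw [Finset.sum_range_succ]
          congr 2
          funext k
          rw [hit]
          simp [wcat]
        have := H (Fin.snoc (α := fun _ => A) w a)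
        rw [hw, hw, hb, hb, Real.exp_add, Real.exp_add] at this
        have e0 := Real.exp_pos (φ (cons a x))
        rw [Real.exp_sub]
        refine le_of_mul_le_mul_right ?_ e0
        field_simp
        linarith)
      rw [Real.exp_sub] at this
      have e0 := Real.exp_pos (φ (cons a x))
      calc _ ≤ Real.exp (φ (cons a x)) * _ := mul_le_mul_of_nonneg_left this e0.le
        _ = _ := by field_simp
    have h1 : lam * h x ≤ K * (lam * h y) := by
      rw [← heig, ← heig]
      unfold transfer
      rw [Finset.mul_sum]
      exact Finset.sum_le_sum fun a _ => hterm a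
    refine le_of_mul_le_mul_left ?_ hlam
    linarith


/-- averaging operator with weights `g` -/
def avg {A : Type*} [Fintype A] (g : A → (ℕ → A) → ℝ) (f : (ℕ → A) → ℝ) (x : ℕ → A) : ℝ :=
  ∑ a, g a x * f (cons a x)

theorem avg_one_sided {A : Type*} [Fintype A] {g : A → (ℕ → A) → ℝ} (hg0 : ∀ a x, 0 ≤ g a x)
    (hg1 : ∀ x, ∑ a, g a x = 1) {f : (ℕ → A) → ℝ} {B b r : ℝ} (hr0 : 0 ≤ r)
    (x y : ℕ → A) (hB : ∀ x y, f x - f y ≤ B) (hb : ∀ a, f (cons a x) - f (cons a y) ≤ b)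
    (hr : ∀ a, r * g a y ≤ g a x) : avg g f x - avg g f y ≤ (1 - r) * B + r * b := by
  have hp : ∑ a, (g a x - r * g a y) = 1 - r := by
    rw [Finset.sum_sub_distrib, ← Finset.mul_sum, hg1, hg1, mul_one]
  have h1 : ∀ c, ∑ a, (g a x - r * g a y) * f (cons a x) ≤ (1 - r) * (f (cons c y) + B) := by
    intro c
    rw [← hp, Finset.sum_mul]
    refine Finset.sum_le_sum fun a _ => mul_le_mul_of_nonneg_left ?_ (by linarith [hr a])
    linarith [hB (cons a x) (cons c y)]
  have h2 : ∑ a, (g a x - r * g a y) * f (cons a x) ≤ (1 - r) * (avg g f y + B) := by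
    calc ∑ a, (g a x - r * g a y) * f (cons a x)
        = ∑ c, g c y * ∑ a, (g a x - r * g a y) * f (cons a x) := by
          rw [← Finset.sum_mul, hg1, one_mul]
      _ ≤ ∑ c, g c y * ((1 - r) * (f (cons c y) + B)) :=
          Finset.sum_le_sum fun c _ => mul_le_mul_of_nonneg_left (h1 c) (hg0 _ _)
      _ = (1 - r) * (avg g f y + (∑ c, g c y) * B) := by
          unfold avg
          rw [Finset.sum_mul, ← Finset.sum_add_distrib, Finset.mul_sum]
          refine Finset.sum_congr rfl fun c _ => by ring
      _ = _ := by rw [hg1, one_mul]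
  have h3 : ∑ a, r * g a y * (f (cons a x) - f (cons a y)) ≤ r * b := by
    calc _ ≤ ∑ a, r * g a y * b := Finset.sum_le_sum fun a _ =>
          mul_le_mul_of_nonneg_left (hb a) (mul_nonneg hr0 (hg0 _ _))
      _ = r * b := by rw [← Finset.sum_mul, ← Finset.mul_sum, hg1, mul_one]
  have h4 : avg g f x = ∑ a, (g a x - r * g a y) * f (cons a x)
      + ∑ a, r * g a y * (f (cons a x) - f (cons a y)) + r * avg g f y := by
    unfold avg
    rw [Finset.mul_sum, ← Finset.sum_add_distrib, ← Finset.sum_add_distrib]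
    refine Finset.sum_congr rfl fun c _ => by ring
  nlinarith

theorem avg_step {A : Type*} [Fintype A] {g : A → (ℕ → A) → ℝ} (hg0 : ∀ a x, 0 ≤ g a x)
    (hg1 : ∀ x, ∑ a, g a x = 1) {f : (ℕ → A) → ℝ} {B b r : ℝ} (hr0 : 0 ≤ r)
    (x y : ℕ → A) (hB : ∀ x y, |f x - f y| ≤ B) (hb : ∀ a, |f (cons a x) - f (cons a y)| ≤ b)
    (hr : ∀ a, r * g a y ≤ g a x) (hr' : ∀ a, r * g a x ≤ g a y) :
    |avg g f x - avg g f y| ≤ (1 - r) * B + r * b := by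
  rw [abs_sub_le_iff]
  constructor
  · exact avg_one_sided hg0 hg1 hr0 x y (fun x y => (le_abs_self _).trans (hB x y))
      (fun a => (le_abs_self _).trans (hb a)) hr
  · exact avg_one_sided hg0 hg1 hr0 y x (fun x y => (le_abs_self _).trans (hB x y))
      (fun a => (le_abs_self _).trans (abs_sub_comm (f (cons a y)) _ ▸ hb a)) hr'

/-- corrector functions -/
def corr {A : Type*} [Fintype A] (g : A → (ℕ → A) → ℝ) (ψ : (ℕ → A) → ℝ) : ℕ → (ℕ → A) → ℝ
  | 0 => fun _ => 0
  | k + 1 => avg g (fun x => ψ x + corr g ψ k x)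

/-- The key oscillation estimate. -/
theorem corr_osc {A : Type*} [Fintype A] {g : A → (ℕ → A) → ℝ} (hg0 : ∀ a x, 0 ≤ g a x)
    (hg1 : ∀ x, ∑ a, g a x = 1) {w : ℕ → ℝ} (hw0 : ∀ p, 0 ≤ w p) (hws : Summable w)
    (hgw : ∀ p x y, (∀ i < p, x i = y i) → ∀ a, Real.exp (-(3 * w p)) * g a y ≤ g a x)
    {ψ : (ℕ → A) → ℝ} {s : ℝ} (hs : 0 ≤ s)
    (hψ : ∀ p x y, (∀ i < p, x i = y i) → |ψ x - ψ y| ≤ s * w p) (k : ℕ) (x y : ℕ → A) :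
    |(ψ x + corr g ψ k x) - (ψ y + corr g ψ k y)| ≤
      s * (Real.exp (3 * ∑' i, w i) * ∑' i, w i) := by
  set S := ∑' i, w i with hS
  set σ : ℕ → ℝ := fun p => ∑ i ∈ Finset.range p, w i with hσ
  have hσ0 : ∀ p, 0 ≤ σ p := fun p => Finset.sum_nonneg fun i _ => hw0 i
  have hσS : ∀ p, σ p ≤ S := fun p => hws.sum_le_tsum _ fun i _ => hw0 i
  have hσs : ∀ p, σ (p + 1) = σ p + w p := fun p => Finset.sum_range_succ _ _
  set b : ℕ → ℝ := fun p => s * (Real.exp (3 * S) * S - Real.exp (3 * σ p) * σ p) with hb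
  have hb0 : ∀ p, 0 ≤ b p := by
    intro p
    refine mul_nonneg hs (sub_nonneg.2 ?_)
    exact mul_le_mul (Real.exp_le_exp.2 (by linarith [hσS p])) (hσS p) (hσ0 p) (Real.exp_pos _).le
  have hbz : b 0 = s * (Real.exp (3 * S) * S) := by simp [hb, hσ]
  have hrec : ∀ p, s * w p + ((1 - Real.exp (-(3 * w p))) * b 0
      + Real.exp (-(3 * w p)) * b (p + 1)) ≤ b p := by
    intro p
    have e1 : Real.exp (-(3 * w p)) * Real.exp (3 * σ (p + 1)) = Real.exp (3 * σ p) := by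
      rw [← Real.exp_add, hσs]; congr 1; ring
    have e2 : 1 ≤ Real.exp (3 * σ p) := Real.one_le_exp (by linarith [hσ0 p])
    have e3 : s * w p ≤ s * w p * Real.exp (3 * σ p) :=
      le_mul_of_one_le_right (mul_nonneg hs (hw0 p)) e2
    have e4 : Real.exp (-(3 * w p)) * b (p + 1) = Real.exp (-(3 * w p)) * b 0
        - s * (Real.exp (3 * σ p) * σ (p + 1)) := by
      rw [hbz, ← e1]; simp only [hb]; ring
    rw [e4]
    have : b p = b 0 - s * (Real.exp (3 * σ p) * σ p) := by rw [hbz]; simp only [hb]; ring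
    rw [this, hσs]
    nlinarith
  have main : ∀ k p x y, (∀ i < p, x i = y i) →
      |(ψ x + corr g ψ k x) - (ψ y + corr g ψ k y)| ≤ b p := by
    intro k
    induction k with
    | zero =>
      intro p x y hxy
      have h1 : Real.exp (-(3 * w p)) ≤ 1 := Real.exp_le_one_iff.2 (by linarith [hw0 p])
      have h2 := mul_nonneg (sub_nonneg.2 h1) (hb0 0)
      have h3 := mul_nonneg (Real.exp_pos (-(3 * w p))).le (hb0 (p + 1))
      simp only [corr, add_zero]
      linarith [hψ p x y hxy, hrec p]
    | succ k ih =>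
      intro p x y hxy
      have h1 := avg_step hg0 hg1 (f := fun x => ψ x + corr g ψ k x) (Real.exp_pos (-(3 * w p))).le
        x y (fun x y => ih 0 x y (by simp))
        (fun a => ih (p + 1) (cons a x) (cons a y) (agree_cons a hxy))
        (hgw p x y hxy) (hgw p y x fun i hi => (hxy i hi).symm)
      have h2 := hψ p x y hxy
      have h3 : (ψ x + corr g ψ (k + 1) x) - (ψ y + corr g ψ (k + 1) y) =
        (ψ x - ψ y) + (avg g (fun x => ψ x + corr g ψ k x) x
          - avg g (fun x => ψ x + corr g ψ k x) y) := by
        simp only [corr]; ring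
      rw [h3]
      exact (abs_add_le _ _).trans (by linarith [hrec p])
  rw [← hbz]
  exact main k 0 x y (by simp)

theorem avg_exp_le {A : Type*} [Fintype A] {g : A → (ℕ → A) → ℝ} (hg0 : ∀ a x, 0 ≤ g a x)
    (hg1 : ∀ x, ∑ a, g a x = 1) {f : (ℕ → A) → ℝ} {M : ℝ} (hM : ∀ x y, |f x - f y| ≤ M)
    (x : ℕ → A) : avg g (fun z => Real.exp (f z)) x ≤ Real.exp (avg g f x + M ^ 2) := by
  have hc : ∀ a, |f (cons a x) - avg g f x| ≤ M := by
    intro a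
    have : f (cons a x) - avg g f x = ∑ b, g b x * (f (cons a x) - f (cons b x)) := by
      simp only [mul_sub, Finset.sum_sub_distrib, ← Finset.sum_mul, hg1, one_mul, avg]
    rw [this]
    calc _ ≤ ∑ b, |g b x * (f (cons a x) - f (cons b x))| := Finset.abs_sum_le_sum_abs _ _
      _ ≤ ∑ b, g b x * M := Finset.sum_le_sum fun b _ => by
          rw [abs_mul, abs_of_nonneg (hg0 b x)]
          exact mul_le_mul_of_nonneg_left (hM _ _) (hg0 _ _)
      _ = M := by rw [← Finset.sum_mul, hg1, one_mul]
  have h1 : ∀ a, Real.exp (f (cons a x)) ≤ Real.exp (avg g f x) *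
      ((f (cons a x) - avg g f x) + Real.exp (M ^ 2)) := by
    intro a
    have h2 := exp_le_add_exp_sq (f (cons a x) - avg g f x)
    have h3 : Real.exp ((f (cons a x) - avg g f x) ^ 2) ≤ Real.exp (M ^ 2) :=
      Real.exp_le_exp.2 (sq_le_sq' (abs_le.1 (hc a)).1 (abs_le.1 (hc a)).2)
    calc Real.exp (f (cons a x))
        = Real.exp (avg g f x) * Real.exp (f (cons a x) - avg g f x) := by
          rw [← Real.exp_add]; congr 1; ring
      _ ≤ _ := mul_le_mul_of_nonneg_left (by linarith) (Real.exp_pos _).le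
  calc avg g (fun z => Real.exp (f z)) x ≤ ∑ a, g a x * (Real.exp (avg g f x) *
      ((f (cons a x) - avg g f x) + Real.exp (M ^ 2))) :=
        Finset.sum_le_sum fun a _ => mul_le_mul_of_nonneg_left (h1 a) (hg0 _ _)
    _ = Real.exp (avg g f x) * ((avg g f x - (∑ a, g a x) * avg g f x)
          + (∑ a, g a x) * Real.exp (M ^ 2)) := by
        conv_rhs => rw [show (avg g f x - (∑ a, g a x) * avg g f x) =
          ∑ a, g a x * (f (cons a x) - avg g f x) by
            simp only [mul_sub, Finset.sum_sub_distrib, ← Finset.sum_mul]; rfl]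
        rw [Finset.sum_mul, ← Finset.sum_add_distrib, Finset.mul_sum]
        exact Finset.sum_congr rfl fun a _ => by ring
    _ = _ := by rw [hg1, Real.exp_add]; ring

theorem continuous_avg {A : Type*} [Fintype A] [TopologicalSpace A] {g : A → (ℕ → A) → ℝ}
    (hgc : ∀ a, Continuous (g a)) {f : (ℕ → A) → ℝ} (hf : Continuous f) : Continuous (avg g f) := by
  unfold avg
  exact continuous_finsetSum _ fun a _ => (hgc a).mul (hf.comp (continuous_cons a))

theorem continuous_corr {A : Type*} [Fintype A] [TopologicalSpace A] {g : A → (ℕ → A) → ℝ}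
    (hgc : ∀ a, Continuous (g a)) {ψ : (ℕ → A) → ℝ} (hψ : Continuous ψ) (k : ℕ) :
    Continuous (corr g ψ k) := by
  induction k with
  | zero => exact continuous_const
  | succ k ih => exact continuous_avg hgc (hψ.add ih)

theorem mgf_bound {A : Type*} [Fintype A] [MeasurableSpace A] [TopologicalSpace A]
    {g : A → (ℕ → A) → ℝ} (hg0 : ∀ a x, 0 ≤ g a x)
    (hg1 : ∀ x, ∑ a, g a x = 1) (hgc : ∀ a, Continuous (g a))
    (μ : Measure (ℕ → A)) [IsProbabilityMeasure μ]
    (hint : ∀ f : (ℕ → A) → ℝ, Continuous f → Integrable f μ)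
    (hinv : ∀ f : (ℕ → A) → ℝ, Continuous f → ∫ x, avg g f x ∂μ = ∫ x, f x ∂μ)
    {ψ : (ℕ → A) → ℝ} (hψ : Continuous ψ) {M : ℝ} (hM0 : 0 ≤ M)
    (hM : ∀ k x y, |(ψ x + corr g ψ k x) - (ψ y + corr g ψ k y)| ≤ M) (n : ℕ) (hn : 1 ≤ n) :
    ∫ x, Real.exp (birk ψ n x) ∂μ ≤ Real.exp (n * ∫ x, ψ x ∂μ + 2 * n * M ^ 2) := by
  have hcc := continuous_corr hgc hψ
  have step : ∀ m k, ∫ x, Real.exp (birk ψ m x + corr g ψ k x) ∂μ ≤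
      Real.exp (m * M ^ 2) * ∫ x, Real.exp (corr g ψ (k + m) x) ∂μ := by
    intro m
    induction m with
    | zero => intro k; simp [birk]
    | succ m ih =>
      intro k
      have hcont : Continuous fun x => Real.exp (birk ψ (m + 1) x + corr g ψ k x) :=
        Real.continuous_exp.comp ((continuous_birk hψ _).add (hcc k))
      have hcont' : Continuous fun x => Real.exp (M ^ 2) *
          Real.exp (birk ψ m x + corr g ψ (k + 1) x) :=
        continuous_const.mul (Real.continuous_exp.comp ((continuous_birk hψ _).add (hcc (k + 1))))
      rw [← hinv _ hcont]
      calc _ ≤ ∫ x, Real.exp (M ^ 2) * Real.exp (birk ψ m x + corr g ψ (k + 1) x) ∂μ := by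
            refine integral_mono (hint _ (continuous_avg hgc hcont)) (hint _ hcont') fun x => ?_
            have h1 := avg_exp_le hg0 hg1 (hM k) x
            have h2 : avg g (fun x => Real.exp (birk ψ (m + 1) x + corr g ψ k x)) x =
                Real.exp (birk ψ m x) * avg g (fun z => Real.exp (ψ z + corr g ψ k z)) x := by
              unfold avg
              rw [Finset.mul_sum]
              refine Finset.sum_congr rfl fun a _ => ?_
              beta_reduce
              rw [birk_succ', cons_shift, show ψ (cons a x) + birk ψ m x + corr g ψ k (cons a x) =
                birk ψ m x + (ψ (cons a x) + corr g ψ k (cons a x)) by ring, Real.exp_add]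
              ring
            show avg g (fun x => Real.exp (birk ψ (m + 1) x + corr g ψ k x)) x ≤ _
            rw [h2]
            calc _ ≤ _ := mul_le_mul_of_nonneg_left h1 (Real.exp_pos _).le
              _ = _ := by
                rw [← Real.exp_add, ← Real.exp_add]
                congr 1
                simp only [corr]
                ring
        _ = Real.exp (M ^ 2) * ∫ x, Real.exp (birk ψ m x + corr g ψ (k + 1) x) ∂μ :=
            integral_const_mul _ _
        _ ≤ _ := mul_le_mul_of_nonneg_left (ih (k + 1)) (Real.exp_pos _).le
        _ = _ := by
            rw [← mul_assoc, ← Real.exp_add, show k + 1 + m = k + (m + 1) by ring]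
            congr 2
            push_cast
            ring
  have hmean : ∀ k, ∫ x, corr g ψ k x ∂μ = k * ∫ x, ψ x ∂μ := by
    intro k
    induction k with
    | zero => simp [corr]
    | succ k ih =>
      simp only [corr]
      rw [hinv (fun x => ψ x + corr g ψ k x) (hψ.add (hcc k)), integral_add (hint _ hψ) (hint _ (hcc k)), ih]
      push_cast; ring
  have hosc : ∀ x y, |corr g ψ n x - corr g ψ n y| ≤ M := by
    intro x y
    obtain ⟨k, rfl⟩ : ∃ k, n = k + 1 := ⟨n - 1, by omega⟩
    have := avg_step hg0 hg1 (f := fun x => ψ x + corr g ψ k x) (r := 0) le_rfl x y (hM k)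
      (fun a => hM k _ _) (by simpa using fun a => hg0 a x) (by simpa using fun a => hg0 a y)
    simpa [corr] using this
  have hfin : ∫ x, Real.exp (corr g ψ n x) ∂μ ≤ Real.exp (n * ∫ x, ψ x ∂μ + M ^ 2) := by
    rw [← hmean]
    set m := ∫ x, corr g ψ n x ∂μ with hm
    have hc : ∀ x, |corr g ψ n x - m| ≤ M := by
      intro x
      have : corr g ψ n x - m = ∫ y, (corr g ψ n x - corr g ψ n y) ∂μ := by
        rw [integral_sub (integrable_const _) (hint _ (hcc n))]
        simp [hm]
      rw [this, ← Real.norm_eq_abs]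
      refine (norm_integral_le_of_norm_le_const (C := M) (Eventually.of_forall fun y => ?_)).trans ?_
      · exact hosc x y
      · simp
    calc _ ≤ ∫ x, Real.exp m * ((corr g ψ n x - m) + Real.exp (M ^ 2)) ∂μ := by
          refine integral_mono (hint _ (Real.continuous_exp.comp (hcc n)))
            (hint _ (continuous_const.mul (((hcc n).sub continuous_const).add continuous_const)))
            fun x => ?_
          have h2 := exp_le_add_exp_sq (corr g ψ n x - m)
          have h3 : Real.exp ((corr g ψ n x - m) ^ 2) ≤ Real.exp (M ^ 2) :=
            Real.exp_le_exp.2 (sq_le_sq' (abs_le.1 (hc x)).1 (abs_le.1 (hc x)).2)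
          calc Real.exp (corr g ψ n x)
              = Real.exp m * Real.exp (corr g ψ n x - m) := by
                rw [← Real.exp_add]; congr 1; ring
            _ ≤ _ := mul_le_mul_of_nonneg_left (by linarith) (Real.exp_pos _).le
      _ = Real.exp (m + M ^ 2) := by
          have hsub : Integrable (fun x => corr g ψ n x - m) μ :=
            (hint _ (hcc n)).sub (integrable_const _)
          rw [integral_const_mul, integral_add hsub (integrable_const _), integral_sub (hint _ (hcc n)) (integrable_const _), Real.exp_add]
          simp [hm]
  have h0 := step n 0
  simp only [corr, add_zero, zero_add] at h0
  refine h0.trans ((mul_le_mul_of_nonneg_left hfin (Real.exp_pos _).le).trans ?_)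
  rw [← Real.exp_add]
  refine Real.exp_le_exp.2 ?_
  have : (1 : ℝ) ≤ n := by exact_mod_cast hn
  nlinarith [sq_nonneg M]


theorem summable_of_cases {θ : ℝ} (hθ0 : 0 < θ) (hθ1 : θ < 1) {W : ℕ → ℝ≥0∞}
    (hcases :
      (∃ B > (0 : ℝ), ∀ n : ℕ, W n ≤ ENNReal.ofReal (B * θ ^ n)) ∨
      (∃ α > (1 : ℝ), ∃ B > (0 : ℝ), ∀ n : ℕ, 1 ≤ n →
        W n ≤ ENNReal.ofReal (B * (n : ℝ) ^ (-α))) ∨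
      (∃ θ₀ : ℝ, 0 < θ₀ ∧ θ₀ < 1 ∧ ∃ α > (1 : ℝ), ∃ B > (0 : ℝ), ∀ n : ℕ, 1 ≤ n →
        W n ≤ ENNReal.ofReal (B * θ₀ ^ (Real.log n ^ α))) ∨
      (∃ c > (0 : ℝ), ∃ α : ℝ, 0 < α ∧ α < 1 ∧ ∃ B > (0 : ℝ), ∀ n : ℕ,
        W n ≤ ENNReal.ofReal (B * Real.exp (-c * (n : ℝ) ^ α)))) :
    Summable (fun n => (W n).toReal) := by
  have key : ∀ (B : ℝ) (F : ℕ → ℝ), 0 < B → (∀ᶠ n in atTop, 0 ≤ F n) → Summable F →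
      (∀ᶠ n in atTop, W n ≤ ENNReal.ofReal (B * F n)) → Summable (fun n => (W n).toReal) := by
    intro B F hB hF0 hF h
    refine summable_of_isBigO_nat (hF.mul_left B) (Asymptotics.IsBigO.of_bound 1 ?_)
    filter_upwards [h, hF0] with n hn h0
    have h1 : 0 ≤ B * F n := mul_nonneg hB.le h0
    rw [Real.norm_of_nonneg ENNReal.toReal_nonneg, Real.norm_of_nonneg h1, one_mul]
    exact ENNReal.toReal_le_of_le_ofReal h1 hn
  have h2s : Summable (fun n : ℕ => (n : ℝ) ^ (-2 : ℝ)) :=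
    Real.summable_nat_rpow.2 (by norm_num)
  have h20 : ∀ᶠ n : ℕ in atTop, (0 : ℝ) ≤ (n : ℝ) ^ (-2 : ℝ) :=
    Eventually.of_forall fun n => by positivity
  have hlogt : Tendsto (fun n : ℕ => Real.log n) atTop atTop :=
    Real.tendsto_log_atTop.comp tendsto_natCast_atTop_atTop
  rcases hcases with ⟨B, hB, h⟩ | ⟨α, hα, B, hB, h⟩ | ⟨θ₀, h0, h1, α, hα, B, hB, h⟩ |
    ⟨c, hc, α, hα0, hα1, B, hB, h⟩
  · exact key B (fun n => θ ^ n) hB (Eventually.of_forall fun n => by positivity)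
      (summable_geometric_of_lt_one hθ0.le hθ1) (Eventually.of_forall h)
  · exact key B (fun n => (n : ℝ) ^ (-α)) hB (Eventually.of_forall fun n => by positivity)
      (Real.summable_nat_rpow.2 (by linarith)) ((eventually_ge_atTop 1).mono h)
  · refine key B _ hB h20 h2s ?_
    have hl : 0 < -Real.log θ₀ := by linarith [Real.log_neg h0 h1]
    have ht : Tendsto (fun n : ℕ => Real.log n ^ (α - 1)) atTop atTop :=
      (tendsto_rpow_atTop (by linarith)).comp hlogt
    filter_upwards [eventually_ge_atTop 1, ht.eventually_ge_atTop (2 / (-Real.log θ₀)),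
      hlogt.eventually_gt_atTop 0] with n hn hn2 hn3
    refine (h n hn).trans (ENNReal.ofReal_le_ofReal (mul_le_mul_of_nonneg_left ?_ hB.le))
    have hnp : (0 : ℝ) < n := by exact_mod_cast hn
    rw [Real.rpow_def_of_pos h0, Real.rpow_def_of_pos hnp]
    refine Real.exp_le_exp.2 ?_
    have e : Real.log n ^ α = Real.log n * Real.log n ^ (α - 1) := by
      rw [← Real.rpow_one_add' hn3.le (by linarith)]; congr 1; ring
    rw [div_le_iff₀ hl] at hn2
    rw [e]
    nlinarith
  · refine key B _ hB h20 h2s ?_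
    have ho := (isLittleO_log_rpow_atTop hα0).comp_tendsto (tendsto_natCast_atTop_atTop (R := ℝ))
    have hb := ho.bound (show 0 < c / 2 by positivity)
    filter_upwards [eventually_ge_atTop 1, hb, hlogt.eventually_gt_atTop 0] with n hn hn2 hn3
    refine (h n).trans (ENNReal.ofReal_le_ofReal (mul_le_mul_of_nonneg_left ?_ hB.le))
    have hnp : (0 : ℝ) < n := by exact_mod_cast hn
    rw [Real.rpow_def_of_pos hnp (-2)]
    refine Real.exp_le_exp.2 ?_
    simp only [Function.comp] at hn2
    rw [Real.norm_of_nonneg hn3.le, Real.norm_of_nonneg (by positivity)] at hn2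

    linarith

end Aux

/-- Gaussian concentration for Birkhoff sums of `d_φ`-Lipschitz observables. -/
theorem stmt4 {A : Type*} [Fintype A] [MeasurableSpace A] [TopologicalSpace A]
    [DiscreteTopology A] (hcard : 2 ≤ Fintype.card A)
    (θ : ℝ) (hθ0 : 0 < θ) (hθ1 : θ < 1)
    (φ : (ℕ → A) → ℝ) (hφ : Continuous φ) (hWalters : Walters φ)
    (hcases :
      (∃ B > (0 : ℝ), ∀ n : ℕ, Wp φ n ≤ ENNReal.ofReal (B * θ ^ n)) ∨
      (∃ α > (1 : ℝ), ∃ B > (0 : ℝ), ∀ n : ℕ, 1 ≤ n →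
        Wp φ n ≤ ENNReal.ofReal (B * (n : ℝ) ^ (-α))) ∨
      (∃ θ₀ : ℝ, 0 < θ₀ ∧ θ₀ < 1 ∧ ∃ α > (1 : ℝ), ∃ B > (0 : ℝ), ∀ n : ℕ, 1 ≤ n →
        Wp φ n ≤ ENNReal.ofReal (B * θ₀ ^ (Real.log n ^ α))) ∨
      (∃ c > (0 : ℝ), ∃ α : ℝ, 0 < α ∧ α < 1 ∧ ∃ B > (0 : ℝ), ∀ n : ℕ,
        Wp φ n ≤ ENNReal.ofReal (B * Real.exp (-c * (n : ℝ) ^ α))))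
    -- the equilibrium state μ_φ = h·ν :
    (lam : ℝ) (hlam : 0 < lam) (h : (ℕ → A) → ℝ) (hh : Continuous h) (hhpos : ∀ x, 0 < h x)
    (ν : Measure (ℕ → A)) [IsProbabilityMeasure ν]
    (heig : ∀ x, transfer φ h x = lam * h x)
    (heig' : ∀ f : (ℕ → A) → ℝ, Continuous f → ∫ x, transfer φ f x ∂ν = lam * ∫ x, f x ∂ν)
    (hint : ∫ x, h x ∂ν = 1) :
    ∃ D > (0 : ℝ), ∀ ψ : (ℕ → A) → ℝ, Continuous ψ → eLip φ ψ ≠ ⊤ →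
      ∀ u : ℝ, 0 < u → ∀ n : ℕ, 1 ≤ n →
        (ν.withDensity fun x => ENNReal.ofReal (h x))
            {x : ℕ → A | (1 / (n : ℝ)) * birk ψ n x
              - (∫ y, ψ y ∂(ν.withDensity fun x => ENNReal.ofReal (h x))) ≥ u} ≤
          ENNReal.ofReal
            (Real.exp (-((n : ℝ) * u ^ 2) / (4 * D * ((eLip φ ψ).toReal) ^ 2))) := by
  classical
  have hWtop : ∀ p, Wp φ p ≠ ⊤ := by
    intro p
    refine ne_top_of_le_ne_top hWalters.1 ?_
    exact iSup_mono fun x => iSup_mono fun y => iSup_le fun _ => le_rfl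
  have hA : Nonempty A := Fintype.card_pos_iff.1 (by omega)
  set w : ℕ → ℝ := fun p => (Wp φ p).toReal with hw
  have hw0 : ∀ p, 0 ≤ w p := fun p => ENNReal.toReal_nonneg
  have hwpos : ∀ p, 0 < w p := fun p => ENNReal.toReal_pos (hWalters.2.1 p).ne' (hWtop p)
  have hwanti : ∀ p, w (p + 1) ≤ w p := fun p =>
    ENNReal.toReal_mono (hWtop p) (hWalters.2.2.1 (Nat.le_succ p))
  have hws : Summable w := summable_of_cases hθ0 hθ1 hcases
  have hbirk : ∀ p x y, (∀ i < p, x i = y i) → ∀ n (a : Fin n → A),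
      |birk φ n (wcat a x) - birk φ n (wcat a y)| ≤ w p := by
    intro p x y hxy n a
    have h1 : ENNReal.ofReal |birk φ n (wcat a x) - birk φ n (wcat a y)| ≤ Wp φ p := by
      unfold Wp Wpair
      refine le_trans ?_ (le_iSup_of_le x (le_iSup_of_le y (le_iSup_of_le hxy le_rfl)))
      exact le_iSup_of_le n (le_iSup_of_le a le_rfl)
    exact (ENNReal.ofReal_le_iff_le_toReal (hWtop p)).1 h1
  have hφ1 : ∀ p x y, (∀ i < p, x i = y i) → ∀ a, |φ (cons a x) - φ (cons a y)| ≤ w p := by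
    intro p x y hxy a
    have := hbirk p x y hxy 1 (fun _ => a)
    have e : ∀ x : ℕ → A, wcat (fun _ : Fin 1 => a) x = cons a x := by
      intro x
      funext k
      cases k with
      | zero => rfl
      | succ k => rfl
    simpa [e, birk] using this
  have hlogc : Continuous fun x => Real.log (h x) := hh.log fun x => (hhpos x).ne'
  have hlog1 : ∀ p x y, (∀ i < p, x i = y i) → Real.log (h x) - Real.log (h y) ≤ w p := by
    intro p x y hxy
    refine le_of_forall_pos_le_add fun ε hε => ?_
    obtain ⟨n, hn⟩ := exists_small_var hlogc hε
    have := h_compare hlam heig n (Real.exp (w p + ε)) x y (by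
      intro a
      have h1 := (abs_le.1 (hbirk p x y hxy n a)).2
      have h2 := (abs_lt.1 (hn (wcat a x) (wcat a y) (by intro i hi; simp [wcat, hi]))).2
      rw [← Real.exp_log (hhpos (wcat a x)), ← Real.exp_log (hhpos (wcat a y)),
        ← Real.exp_add, ← Real.exp_add, ← Real.exp_add]
      exact Real.exp_le_exp.2 (by linarith))
    have h3 := Real.log_le_log (hhpos x) this
    rw [Real.log_mul (Real.exp_pos _).ne' (hhpos y).ne', Real.log_exp] at h3
    linarith
  -- normalised weights
  set g : A → (ℕ → A) → ℝ := fun a x =>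
    Real.exp (φ (cons a x) + Real.log (h (cons a x)) - Real.log (h x) - Real.log lam) with hg
  have hgeq : ∀ a x, g a x = Real.exp (φ (cons a x)) * h (cons a x) / (lam * h x) := by
    intro a x
    simp only [hg]
    rw [Real.exp_sub, Real.exp_sub, Real.exp_add, Real.exp_log (hhpos _), Real.exp_log (hhpos _),
      Real.exp_log hlam]
    have := hhpos x
    field_simp
  have hg0 : ∀ a x, 0 ≤ g a x := fun a x => (Real.exp_pos _).le
  have hg1 : ∀ x, ∑ a, g a x = 1 := by
    intro x
    simp_rw [hgeq]
    rw [← Finset.sum_div]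
    have := heig x
    unfold transfer at this
    rw [this]
    exact div_self (mul_pos hlam (hhpos x)).ne'
  have hgc : ∀ a, Continuous (g a) := by
    intro a
    exact Real.continuous_exp.comp ((((hφ.comp (continuous_cons a)).add
      (hlogc.comp (continuous_cons a))).sub hlogc).sub continuous_const)
  have hgw : ∀ p x y, (∀ i < p, x i = y i) → ∀ a,
      Real.exp (-(3 * w p)) * g a y ≤ g a x := by
    intro p x y hxy a
    simp only [hg]
    rw [← Real.exp_add]
    refine Real.exp_le_exp.2 ?_
    have hyx : ∀ i < p, y i = x i := fun i hi => (hxy i hi).symm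
    have h1 := (abs_le.1 (hφ1 p x y hxy a)).1
    have h2 := hlog1 p x y hxy
    have h3 := hlog1 (p + 1) (cons a y) (cons a x) (agree_cons a hyx)
    have h4 := hwanti p
    linarith
  -- the measure
  have haem : ∀ f : (ℕ → A) → ℝ, Continuous f → AEMeasurable f ν := fun f hf =>
    aemeas_of_continuous hφ ν heig' hf
  set μ : Measure (ℕ → A) := ν.withDensity fun x => ENNReal.ofReal (h x) with hμ
  have hinth : Integrable h ν := integrable_of_cont ν hh (haem h hh)
  haveI hprob : IsProbabilityMeasure μ := by
    refine ⟨?_⟩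
    rw [hμ, withDensity_apply _ MeasurableSet.univ, Measure.restrict_univ,
      ← ofReal_integral_eq_lintegral_ofReal hinth (Eventually.of_forall fun x => (hhpos x).le),
      hint, ENNReal.ofReal_one]
  have hintμ : ∀ f : (ℕ → A) → ℝ, Continuous f → Integrable f μ := fun f hf =>
    integrable_of_cont μ hf ((haem f hf).mono_ac (withDensity_absolutelyContinuous _ _))
  have hμint : ∀ f : (ℕ → A) → ℝ, ∫ x, f x ∂μ = ∫ x, h x * f x ∂ν := by
    intro f
    rw [hμ, integral_withDensity_eq_integral_toReal_smul₀ (haem h hh).ennreal_ofReal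
      (Eventually.of_forall fun x => ENNReal.ofReal_lt_top)]
    refine integral_congr_ae (Eventually.of_forall fun x => ?_)
    simp [ENNReal.toReal_ofReal (hhpos x).le]
  have hinv : ∀ f : (ℕ → A) → ℝ, Continuous f → ∫ x, avg g f x ∂μ = ∫ x, f x ∂μ := by
    intro f hf
    rw [hμint, hμint]
    have h1 := heig' (fun x => h x * f x) (hh.mul hf)
    have h2 : ∀ x, h x * avg g f x = lam⁻¹ * transfer φ (fun x => h x * f x) x := by
      intro x
      unfold avg transfer
      rw [Finset.mul_sum, Finset.mul_sum]
      refine Finset.sum_congr rfl fun a _ => ?_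
      rw [hgeq]
      have := hhpos x
      field_simp
    simp_rw [h2]
    rw [integral_const_mul, h1, ← mul_assoc, inv_mul_cancel₀ hlam.ne', one_mul]
  set S := ∑' i, w i with hS
  have hSpos : 0 < S := hws.tsum_pos hw0 0 (hwpos 0)
  set K : ℝ := Real.exp (3 * S) * S with hK
  have hKpos : 0 < K := mul_pos (Real.exp_pos _) hSpos
  refine ⟨2 * K ^ 2, by positivity, ?_⟩
  intro ψ hψ hLip u hu n hn
  set L := (eLip φ ψ).toReal with hL
  have hL0 : 0 ≤ L := ENNReal.toReal_nonneg
  have hψv : ∀ p x y, (∀ i < p, x i = y i) → |ψ x - ψ y| ≤ L * w p := by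
    intro p x y hxy
    have h1 : ENNReal.ofReal |ψ x - ψ y| ≤ evar ψ p :=
      le_iSup_of_le x (le_iSup_of_le y (le_iSup_of_le hxy le_rfl))
    have h2 : evar ψ p / Wp φ p ≤ eLip φ ψ := le_iSup (fun n => evar ψ n / Wp φ n) p
    rw [ENNReal.div_le_iff (hWalters.2.1 p).ne' (hWtop p)] at h2
    have h3 := (ENNReal.ofReal_le_iff_le_toReal (ENNReal.mul_ne_top hLip (hWtop p))).1 (h1.trans h2)
    rwa [ENNReal.toReal_mul] at h3
  rcases hL0.eq_or_lt with hLz | hLpos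
  · rw [← hLz]
    simp only [ne_eq, OfNat.ofNat_ne_zero, not_false_eq_true, zero_pow, mul_zero, div_zero,
      Real.exp_zero, ENNReal.ofReal_one]
    exact prob_le_one
  have hnpos : (0 : ℝ) < n := by exact_mod_cast hn
  set t : ℝ := u / (4 * K ^ 2 * L ^ 2) with ht
  have htpos : 0 < t := by positivity
  set m := ∫ y, ψ y ∂μ with hm
  have hbt : ∀ x, birk (fun x => t * ψ x) n x = t * birk ψ n x := by
    intro x; unfold birk; rw [Finset.mul_sum]
  have hmg := mgf_bound hg0 hg1 hgc μ hintμ hinv (ψ := fun x => t * ψ x)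
    (continuous_const.mul hψ) (M := t * L * K) (by positivity)
    (corr_osc hg0 hg1 hw0 hws hgw (s := t * L) (by positivity) (by
      intro p x y hxy
      rw [← mul_sub, abs_mul, abs_of_pos htpos, mul_assoc]
      exact mul_le_mul_of_nonneg_left (hψv p x y hxy) htpos.le)) n hn
  simp_rw [hbt] at hmg
  rw [integral_const_mul] at hmg
  have hexpc : Continuous fun x => Real.exp (t * birk ψ n x) :=
    Real.continuous_exp.comp (continuous_const.mul (continuous_birk hψ n))
  have hch := ProbabilityTheory.measure_ge_le_exp_mul_mgf (μ := μ) (X := birk ψ n)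
    (n * (u + m)) htpos.le (hintμ _ hexpc)
  have hset : {x : ℕ → A | (1 / (n : ℝ)) * birk ψ n x - m ≥ u} =
      {x | n * (u + m) ≤ birk ψ n x} := by
    ext x
    simp only [Set.mem_setOf_eq, ge_iff_le]
    rw [le_sub_iff_add_le, one_div, ← div_eq_inv_mul, le_div_iff₀ hnpos, mul_comm]
  rw [hset]
  have hfin : μ.real {x | n * (u + m) ≤ birk ψ n x} ≤
      Real.exp (-((n : ℝ) * u ^ 2) / (4 * (2 * K ^ 2) * L ^ 2)) := by
    refine hch.trans ?_
    unfold ProbabilityTheory.mgf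
    refine (mul_le_mul_of_nonneg_left hmg (Real.exp_pos _).le).trans ?_
    rw [← Real.exp_add]
    refine Real.exp_le_exp.2 (le_of_eq ?_)
    rw [ht, ← hm]
    field_simp
    ring
  rw [← ENNReal.ofReal_toReal (measure_ne_top μ _)]
  exact ENNReal.ofReal_le_ofReal hfin
end
end

section
/- Let μ be a T-invariant Borel probability measure on Ω satisfying GCB(C). Then for every u > 0 and every n ≥ 1: μ{x ∈ Ω : |d_K(𝓔_n(x), μ) − ∫ d_K(𝓔_n(y), μ) dμ(y)| ≥ u} ≤ 2 exp(−n u²/(4C)). -/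
open MeasureTheory Filter Topology
open scoped ENNReal NNReal BigOperators

noncomputable section

/-- The empirical measure `𝓔_n(x) = (1/n) Σ_{j<n} δ_{T^j x}`. -/
def empMeas {A : Type*} [MeasurableSpace A] (n : ℕ) (x : ℕ → A) : Measure (ℕ → A) :=
  ((n : ℝ≥0∞))⁻¹ • ∑ j ∈ Finset.range n, Measure.dirac (shift^[j] x)

/-- The Kantorovich distance w.r.t. `d_θ` between two measures on `Ω`. -/
def dKant {A : Type*} [MeasurableSpace A] (θ : ℝ) (ν₁ ν₂ : Measure (ℕ → A)) : ℝ :=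
  ⨆ f : {f : (ℕ → A) → ℝ // ∀ x y, |f x - f y| ≤ dtheta θ x y},
    (∫ x, f.1 x ∂ν₁) - ∫ x, f.1 x ∂ν₂


section Aux

set_option linter.unusedSectionVars false

open ProbabilityTheory

variable {A : Type*} {θ : ℝ}

lemma dtheta_self (x : ℕ → A) : dtheta θ x x = 0 := by simp [dtheta]

lemma dtheta_ne {x y : ℕ → A} (h : x ≠ y) : dtheta θ x y = θ ^ sInf {k | x k ≠ y k} := by
  simp [dtheta, h]

lemma dtheta_nonneg (h0 : 0 < θ) (x y : ℕ → A) : 0 ≤ dtheta θ x y := by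
  by_cases h : x = y
  · subst h; rw [dtheta_self]
  · rw [dtheta_ne h]; positivity

lemma dtheta_le_one (h0 : 0 < θ) (h1 : θ < 1) (x y : ℕ → A) : dtheta θ x y ≤ 1 := by
  by_cases h : x = y
  · subst h; rw [dtheta_self]; norm_num
  · rw [dtheta_ne h]; exact pow_le_one₀ h0.le h1.le

lemma dtheta_ge (h0 : 0 < θ) (h1 : θ < 1) {x y : ℕ → A} {k L : ℕ} (hk : k < L)
    (h : x k ≠ y k) : θ ^ L ≤ dtheta θ x y := by
  have hne : x ≠ y := fun e => h (by rw [e])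
  rw [dtheta_ne hne]
  apply pow_le_pow_of_le_one h0.le h1.le
  exact (Nat.sInf_le (s := {k | x k ≠ y k}) h).trans hk.le

lemma dtheta_shift (h0 : 0 < θ) (h1 : θ < 1) (x y : ℕ → A) :
    dtheta θ (shift x) (shift y) ≤ θ⁻¹ * dtheta θ x y := by
  by_cases h : shift x = shift y
  · rw [h, dtheta_self]
    have := dtheta_nonneg h0 x y
    positivity
  · have hne : x ≠ y := fun e => h (by rw [e])
    rw [dtheta_ne h, dtheta_ne hne]
    have hmem : sInf {k | shift x k ≠ shift y k} ∈ {k | shift x k ≠ shift y k} := by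
      apply Nat.sInf_mem
      by_contra hcon
      apply h
      funext k
      by_contra hk
      exact hcon ⟨k, hk⟩
    set s := sInf {k | shift x k ≠ shift y k}
    have hle : sInf {k | x k ≠ y k} ≤ s + 1 := Nat.sInf_le hmem
    have := pow_le_pow_of_le_one h0.le h1.le hle
    rw [pow_succ] at this
    rw [inv_mul_eq_div, le_div_iff₀ h0]
    exact this

lemma dtheta_shift_iter (h0 : 0 < θ) (h1 : θ < 1) (x y : ℕ → A) (j : ℕ) :
    dtheta θ (shift^[j] x) (shift^[j] y) ≤ (θ⁻¹) ^ j * dtheta θ x y := by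
  induction j with
  | zero => simp
  | succ j ih =>
    rw [Function.iterate_succ_apply', Function.iterate_succ_apply']
    refine (dtheta_shift h0 h1 _ _).trans ?_
    rw [pow_succ', mul_assoc]
    exact mul_le_mul_of_nonneg_left ih (by positivity)

lemma shift_iter (j k : ℕ) (x : ℕ → A) : (shift^[j] x) k = x (k + j) := by
  induction j generalizing x with
  | zero => rfl
  | succ j ih => rw [Function.iterate_succ_apply, ih]; simp [shift, add_assoc]

/-- 1-Lipschitz functions. -/
def LipT (θ : ℝ) (f : (ℕ → A) → ℝ) : Prop := ∀ x y, |f x - f y| ≤ dtheta θ x y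

/-- Sets depending on the first `L` coordinates. -/
def Cyl (L : ℕ) (S : Set (ℕ → A)) : Prop := ∀ x y, (∀ i < L, x i = y i) → x ∈ S → y ∈ S

lemma Cyl.lip (h0 : 0 < θ) (h1 : θ < 1) {L : ℕ} {S : Set (ℕ → A)} (h : Cyl L S) :
    LipT θ (S.indicator fun _ => θ ^ L) := by
  intro x y
  have hp : 0 < θ ^ L := by positivity
  by_cases hxy : ∀ i < L, x i = y i
  · have : x ∈ S ↔ y ∈ S := ⟨h x y hxy, h y x fun i hi => (hxy i hi).symm⟩
    have e : S.indicator (fun _ => θ ^ L) x = S.indicator (fun _ => θ ^ L) y := by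
      by_cases hy : y ∈ S
      · simp [hy, this.2 hy]
      · simp [hy, mt this.1 hy]
    rw [e]; simpa using dtheta_nonneg h0 x y
  · push Not at hxy
    obtain ⟨k, hk, hne⟩ := hxy
    refine le_trans ?_ (dtheta_ge h0 h1 hk hne)
    by_cases hx : x ∈ S <;> by_cases hy : y ∈ S <;> simp [hx, hy, abs_of_pos h0, h0.le]

variable [MeasurableSpace A]

lemma LipT.measurable_iff {S : Set (ℕ → A)} (h0 : 0 < θ) (L : ℕ) (ν : Measure (ℕ → A)) :
    AEStronglyMeasurable (S.indicator fun _ => θ ^ L) ν ↔ NullMeasurableSet S ν := by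
  rw [aestronglyMeasurable_iff_aemeasurable]
  haveI : NeZero (θ ^ L) := ⟨by positivity⟩
  exact aemeasurable_indicator_const_iff (θ ^ L)

lemma LipT.bound (h0 : 0 < θ) (h1 : θ < 1) {f : (ℕ → A) → ℝ} (hf : LipT θ f) (x y : ℕ → A) :
    |f x - f y| ≤ 1 := (hf x y).trans (dtheta_le_one h0 h1 x y)

lemma LipT.integrable (h0 : 0 < θ) (h1 : θ < 1) {f : (ℕ → A) → ℝ} (hf : LipT θ f)
    (ν : Measure (ℕ → A)) [IsProbabilityMeasure ν] (hm : AEStronglyMeasurable f ν) :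
    Integrable f ν := by
  obtain ⟨x0⟩ : Nonempty (ℕ → A) := nonempty_of_isProbabilityMeasure ν
  refine Integrable.of_bound hm (|f x0| + 1) (ae_of_all _ fun x => ?_)
  have := hf.bound h0 h1 x x0
  have h2 := abs_sub_abs_le_abs_sub (f x) (f x0)
  rw [Real.norm_eq_abs]; linarith

lemma LipT.integrable_iff (h0 : 0 < θ) (h1 : θ < 1) {f : (ℕ → A) → ℝ} (hf : LipT θ f)
    (ν : Measure (ℕ → A)) [IsProbabilityMeasure ν] :
    Integrable f ν ↔ AEStronglyMeasurable f ν :=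
  ⟨fun h => h.1, hf.integrable h0 h1 ν⟩

lemma LipT.add_const {f : (ℕ → A) → ℝ} (hf : LipT θ f) (c : ℝ) : LipT θ (fun x => f x + c) := by
  intro x y; simpa using hf x y

lemma integral_add_c (h0 : 0 < θ) (h1 : θ < 1) {f : (ℕ → A) → ℝ} (hf : LipT θ f)
    (ν : Measure (ℕ → A)) [IsProbabilityMeasure ν] (hm : AEStronglyMeasurable f ν) (c : ℝ) :
    ∫ x, f x + c ∂ν = ∫ x, f x ∂ν + c := by
  rw [integral_add (hf.integrable h0 h1 ν hm) (integrable_const c)]; simp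

lemma integral_add_c' {f : (ℕ → A) → ℝ}
    (ν : Measure (ℕ → A)) (hm : ¬ AEStronglyMeasurable f ν) (c : ℝ) :
    ∫ x, f x + c ∂ν = 0 := by
  apply integral_undef
  intro h
  apply hm
  have := h.1.sub (aestronglyMeasurable_const (b := c))
  refine this.congr (ae_of_all _ fun x => ?_)
  simp

lemma junk (h0 : 0 < θ) (h1 : θ < 1) {f : (ℕ → A) → ℝ} (hf : LipT θ f)
    (ν₁ ν₂ : Measure (ℕ → A)) [IsProbabilityMeasure ν₁] [IsProbabilityMeasure ν₂]
    (h : ¬ (AEStronglyMeasurable f ν₁ ↔ AEStronglyMeasurable f ν₂)) :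
    dKant θ ν₁ ν₂ = 0 := by
  apply Real.iSup_of_not_bddAbove
  rintro ⟨M, hM⟩
  have key : ∀ c : ℝ, (∫ x, f x + c ∂ν₁) - ∫ x, f x + c ∂ν₂ ≤ M := fun c =>
    hM ⟨⟨fun x => f x + c, hf.add_const c⟩, rfl⟩
  by_cases a1 : AEStronglyMeasurable f ν₁
  · have a2 : ¬ AEStronglyMeasurable f ν₂ := fun a2 => h ⟨fun _ => a2, fun _ => a1⟩
    have := key (M + 1 - ∫ x, f x ∂ν₁)
    rw [integral_add_c h0 h1 hf ν₁ a1, integral_add_c' ν₂ a2] at this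
    linarith
  · have a2 : AEStronglyMeasurable f ν₂ := by
      by_contra a2
      exact h ⟨fun h => absurd h a1, fun h => absurd h a2⟩
    have := key (-(M + 1) - ∫ x, f x ∂ν₂)
    rw [integral_add_c h0 h1 hf ν₂ a2, integral_add_c' ν₁ a1] at this
    linarith

instance empProb (n : ℕ) [NeZero n] (x : ℕ → A) : IsProbabilityMeasure (empMeas n x) := by
  constructor
  simp only [empMeas, Measure.smul_apply, Measure.finsetSum_apply, measure_univ, smul_eq_mul]
  simp [ENNReal.inv_mul_cancel, NeZero.ne n]

lemma empMeas_null {n : ℕ} {x : ℕ → A} {E : Set (ℕ → A)} (hE : MeasurableSet E)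
    (h : ∀ j < n, shift^[j] x ∈ E) : empMeas n x Eᶜ = 0 := by
  simp only [empMeas, Measure.smul_apply, Measure.finsetSum_apply, smul_eq_mul]
  rw [Finset.sum_eq_zero, mul_zero]
  intro j hj
  rw [Measure.dirac_apply' _ hE.compl]
  simp [h j (Finset.mem_range.1 hj)]

lemma dirac_ac {n : ℕ} (hn : 1 ≤ n) (x : ℕ → A) : Measure.dirac x ≪ empMeas n x := by
  intro s hs
  simp only [empMeas, Measure.smul_apply, Measure.finsetSum_apply, smul_eq_mul, mul_eq_zero] at hs
  rcases hs with hs | hs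
  · simp at hs
  · rw [Finset.sum_eq_zero_iff] at hs
    exact hs 0 (Finset.mem_range.2 hn)

lemma dirac_nullMeas {x : ℕ → A} {S : Set (ℕ → A)} (hx : x ∈ S)
    (h : NullMeasurableSet S (Measure.dirac x)) : ∃ E ⊆ S, MeasurableSet E ∧ x ∈ E := by
  obtain ⟨E, hES, hE, hae⟩ := h.exists_measurable_subset_ae_eq
  refine ⟨E, hES, hE, ?_⟩
  by_contra hxE
  have h1 : Measure.dirac x E = 0 := by rw [Measure.dirac_apply' _ hE]; simp [hxE]
  have h2 : Measure.dirac x S = 1 := Measure.dirac_apply_of_mem hx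
  rw [← measure_congr hae, h1] at h2
  exact zero_ne_one h2

lemma no_sub {k : ℕ} {a : A} (ha : ¬ MeasurableSet ({a} : Set A)) {E : Set (ℕ → A)}
    (hE : MeasurableSet E) (hs : E ⊆ {y | y k = a}) : E = ∅ := by
  by_contra hne
  obtain ⟨y, hy⟩ := Set.nonempty_iff_ne_empty.2 hne
  apply ha
  have hm : MeasurableSet ((fun b => Function.update y k b) ⁻¹' E) :=
    (measurable_update y) hE
  convert hm
  ext b
  simp only [Set.mem_singleton_iff, Set.mem_preimage]
  constructor
  · rintro rfl
    have : y k = b := hs hy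
    rw [← this]; simpa using hy
  · intro h
    have := hs h
    simpa using this

lemma eq_dirac (μ : Measure (ℕ → A)) [IsProbabilityMeasure μ] (z : ℕ → A)
    (h : ∀ i (B : Set A), MeasurableSet B → z i ∈ B → μ {y | y i ∈ B}ᶜ = 0) :
    μ = Measure.dirac z := by
  have hle : ∀ E, MeasurableSet E → (z ∈ E ∧ μ Eᶜ = 0) ∨ (z ∉ E ∧ μ E = 0) := by
    let m' : MeasurableSpace (ℕ → A) :=
      { MeasurableSet' := fun E => (z ∈ E ∧ μ Eᶜ = 0) ∨ (z ∉ E ∧ μ E = 0)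
        measurableSet_empty := by right; simp
        measurableSet_compl := by
          intro E hE
          rcases hE with hE | hE
          · right; simpa using hE
          · left; simpa using hE
        measurableSet_iUnion := by
          intro E hE
          by_cases hz : ∃ i, z ∈ E i
          · left
            obtain ⟨i, hi⟩ := hz
            refine ⟨Set.mem_iUnion.2 ⟨i, hi⟩, ?_⟩
            rcases hE i with h | h
            · exact measure_mono_null (Set.compl_subset_compl.2 (Set.subset_iUnion E i)) h.2
            · exact absurd hi h.1
          · right
            push Not at hz
            refine ⟨by simpa using hz, measure_iUnion_null fun i => ?_⟩
            rcases hE i with h | h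
            · exact absurd h.1 (hz i)
            · exact h.2 }
    have hle : (MeasurableSpace.pi : MeasurableSpace (ℕ → A)) ≤ m' := by
      refine iSup_le fun i => ?_
      rintro _ ⟨B, hB, rfl⟩
      by_cases hz : z i ∈ B
      · left; exact ⟨hz, h i B hB hz⟩
      · right
        refine ⟨hz, ?_⟩
        have := h i Bᶜ hB.compl hz
        convert this using 2
        ext y; simp
    exact hle
  ext E hE
  rw [Measure.dirac_apply' _ hE]
  rcases hle E hE with h | h
  · rw [Set.indicator_of_mem h.1, Pi.one_apply, (prob_compl_eq_zero_iff hE).1 h.2]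
  · rw [Set.indicator_of_notMem h.1, h.2]

lemma meas_coord {μ : Measure (ℕ → A)} (hinv : MeasurePreserving shift μ μ) {B : Set A}
    (hB : NullMeasurableSet {y : ℕ → A | y 0 ∈ B} μ) (i : ℕ) :
    NullMeasurableSet {y : ℕ → A | y i ∈ B} μ ∧ μ {y | y i ∈ B} = μ {y | y 0 ∈ B} := by
  have h := hinv.iterate i
  have e : {y : ℕ → A | y i ∈ B} = shift^[i] ⁻¹' {y | y 0 ∈ B} := by
    ext y; simp [shift_iter]
  rw [e]
  exact ⟨hB.preimage h.quasiMeasurePreserving, h.measure_preimage hB⟩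

lemma zlem_bound (h0 : 0 < θ) (h1 : θ < 1) {C : ℝ} (hC : 0 < C)
    {μ : Measure (ℕ → A)} [IsProbabilityMeasure μ]
    (hinv : MeasurePreserving shift μ μ) (hGCB : GCB θ C μ)
    (B : ℕ → Set A) (hB : ∀ i, NullMeasurableSet {y : ℕ → A | y 0 ∈ B i} μ)
    {q : ℝ} (hq : q < 1) (hBq : ∀ i, μ.real {y : ℕ → A | y 0 ∈ B i} ≤ q) (m : ℕ) (hm : 1 ≤ m) :
    μ.real {y : ℕ → A | ∀ i < m, y i ∈ B i} ≤ Real.exp (-((1 - q) ^ 2 / (4 * C)) * m) := by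
  let h : ℕ → (ℕ → A) → ℝ := fun i => Set.indicator {y : ℕ → A | y 0 ∈ B i} (fun _ => 1)
  let X : (ℕ → A) → ℝ := fun y => ∑ i : Fin m, h i (shift^[(i : ℕ)] y)
  have hXi : ∀ (i : ℕ) (y : ℕ → A), h i (shift^[i] y) =
      Set.indicator {y : ℕ → A | y i ∈ B i} (fun _ => (1 : ℝ)) y := by
    intro i y
    by_cases hy : y i ∈ B i <;> simp [h, shift_iter, hy]
  have hint : ∀ i : ℕ, Integrable (fun y => h i (shift^[i] y)) μ := by
    intro i
    simp_rw [hXi]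
    exact (integrable_const 1).indicator₀ (meas_coord hinv (hB i) i).1
  have hintv : ∀ i : ℕ, ∫ y, h i (shift^[i] y) ∂μ ≤ q := by
    intro i
    simp_rw [hXi]
    rw [integral_indicator₀ (meas_coord hinv (hB i) i).1]
    simp only [integral_const, smul_eq_mul, mul_one, measureReal_restrict_apply_univ]
    rw [measureReal_def, (meas_coord hinv (hB i) i).2]
    exact hBq i
  have hXint : Integrable X μ := integrable_finsetSum _ fun i _ => hint i
  have hh : ∀ i y, 0 ≤ h i y ∧ h i y ≤ 1 := by
    intro i y
    by_cases hy : y 0 ∈ B i <;> simp [h, hy]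
  have hXb : ∀ y, |X y| ≤ m := by
    intro y
    rw [abs_of_nonneg (Finset.sum_nonneg fun i _ => (hh _ _).1)]
    refine (Finset.sum_le_sum (g := fun _ : Fin m => (1 : ℝ)) fun i _ => (hh i _).2).trans ?_
    simp
  have hlip : ∀ i, LipT θ (h i) := by
    intro i
    have : Cyl 1 {y : ℕ → A | y 0 ∈ B i} := by
      intro x y hxy hx
      have := hxy 0 (by norm_num)
      simpa [← this] using hx
    intro x y
    by_cases hxy : x 0 = y 0
    · have e : h i x = h i y := by
        by_cases hy : y 0 ∈ B i <;> simp [h, hxy, hy]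
      rw [e]; simpa using dtheta_nonneg h0 x y
    · have := dtheta_ge (L := 0 + 1) h0 h1 (Nat.lt_succ_self 0) hxy
      have hd : dtheta θ x y = 1 := by
        have hne : x ≠ y := fun e => hxy (by rw [e])
        rw [dtheta_ne hne]
        have : sInf {k | x k ≠ y k} = 0 := Nat.sInf_eq_zero.2 (Or.inl hxy)
        rw [this, pow_zero]
      rw [hd, abs_le]
      have := hh i x; have := hh i y
      constructor <;> linarith
  set t : ℝ := (1 - q) / (2 * C) with ht
  have ht0 : 0 ≤ t := by apply div_nonneg <;> linarith
  have hexpint : Integrable (fun y => Real.exp (t * X y)) μ := by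
    refine Integrable.of_bound
      (Real.continuous_exp.comp_aestronglyMeasurable (hXint.1.const_mul t)) (Real.exp (t * m))
      (ae_of_all _ fun y => ?_)
    rw [Real.norm_eq_abs, abs_of_pos (Real.exp_pos _), Real.exp_le_exp]
    exact mul_le_mul_of_nonneg_left ((le_abs_self _).trans (hXb y)) ht0
  have hch := measure_ge_le_exp_mul_mgf (μ := μ) (X := X) (m : ℝ) ht0 hexpint
  have hsep : SepLip θ (fun Y : Fin m → (ℕ → A) => t * ∑ i : Fin m, h i (Y i))
      (fun _ => t) := by
    intro Y i x'
    rw [← mul_sub, abs_mul, abs_of_nonneg ht0, ← Finset.sum_sub_distrib]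
    refine mul_le_mul_of_nonneg_left ?_ ht0
    rw [Finset.sum_eq_single i]
    · simpa using hlip i (Y i) x'
    · intro b _ hb; simp [Function.update_of_ne hb]
    · simp
  have hg := hGCB m hm _ _ hsep
  have hmean : ∫ y, t * X y ∂μ ≤ t * (m * q) := by
    rw [integral_const_mul]
    refine mul_le_mul_of_nonneg_left ?_ ht0
    change ∫ y, ∑ i : Fin m, h i (shift^[(i : ℕ)] y) ∂μ ≤ _
    rw [integral_finsetSum _ fun (i : Fin m) _ => hint i]
    refine (Finset.sum_le_sum (g := fun _ : Fin m => q) fun i _ => hintv i).trans ?_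
    simp
  have hsub : μ.real {y : ℕ → A | ∀ i < m, y i ∈ B i} ≤ μ.real {y | (m : ℝ) ≤ X y} := by
    refine measureReal_mono (fun y hy => ?_)
    have : X y = m := by
      simp only [X]
      rw [Finset.sum_congr (g := fun _ : Fin m => (1 : ℝ)) rfl fun i _ => ?_]
      · simp
      · rw [hXi, Set.indicator_of_mem (show y ∈ {y : ℕ → A | y i ∈ B i} from hy i i.2)]
    exact this.ge
  refine hsub.trans (hch.trans ?_)
  have hmgf : mgf X μ t ≤ Real.exp (t * (m * q)) * Real.exp (C * (m * t ^ 2)) := by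
    refine (hg.trans ?_)
    simp only [Finset.sum_const, Finset.card_univ, Fintype.card_fin, nsmul_eq_mul]
    exact mul_le_mul_of_nonneg_right (Real.exp_le_exp.2 hmean) (Real.exp_pos _).le
  refine (mul_le_mul_of_nonneg_left hmgf (Real.exp_pos _).le).trans ?_
  rw [← Real.exp_add, ← Real.exp_add, Real.exp_le_exp, ht]
  apply le_of_eq
  field_simp
  ring

lemma zlem (h0 : 0 < θ) (h1 : θ < 1) {C : ℝ} (hC : 0 < C)
    {μ : Measure (ℕ → A)} [IsProbabilityMeasure μ]
    (hinv : MeasurePreserving shift μ μ) (hGCB : GCB θ C μ)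
    (B : ℕ → Set A) (hB : ∀ i, NullMeasurableSet {y : ℕ → A | y 0 ∈ B i} μ)
    {q : ℝ} (hq : q < 1) (hBq : ∀ i, μ.real {y : ℕ → A | y 0 ∈ B i} ≤ q) :
    Tendsto (fun m => μ {y : ℕ → A | ∀ i < m, y i ∈ B i}) atTop (𝓝 0) := by
  have hc : 0 < (1 - q) ^ 2 / (4 * C) := by
    have : 0 < 1 - q := by linarith
    positivity
  have h2 : Tendsto (fun m : ℕ => Real.exp (-((1 - q) ^ 2 / (4 * C)) * m)) atTop (𝓝 0) := by
    apply Real.tendsto_exp_atBot.comp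
    exact tendsto_natCast_atTop_atTop.const_mul_atTop_of_neg (by linarith)
  have h3 : Tendsto (fun m => μ.real {y : ℕ → A | ∀ i < m, y i ∈ B i}) atTop (𝓝 0) := by
    refine tendsto_of_tendsto_of_tendsto_of_le_of_le' tendsto_const_nhds h2
      (Eventually.of_forall fun m => measureReal_nonneg) ?_
    filter_upwards [eventually_ge_atTop 1] with m hm
    exact zlem_bound h0 h1 hC hinv hGCB B hB hq hBq m hm
  have h4 := ENNReal.tendsto_ofReal h3
  simpa [ofReal_measureReal] using h4

lemma caseA (h0 : 0 < θ) (h1 : θ < 1) {C : ℝ} (hC : 0 < C)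
    {μ : Measure (ℕ → A)} [IsProbabilityMeasure μ]
    (hinv : MeasurePreserving shift μ μ) (hGCB : GCB θ C μ) {n : ℕ} (hn : 1 ≤ n) (x : ℕ → A)
    (hiff : ∀ L (S : Set (ℕ → A)), Cyl L S →
      (NullMeasurableSet S (empMeas n x) ↔ NullMeasurableSet S μ))
    (k : ℕ) (hk : ¬ MeasurableSet ({x k} : Set A)) : empMeas n x = μ := by
  have hcyl : ∀ (i : ℕ) (B : Set A), Cyl (i + 1) {y : ℕ → A | y i ∈ B} := by
    intro i B y z hyz hy
    have := hyz i (Nat.lt_succ_self i)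
    simpa [← this] using hy
  have hcylk : Cyl (k + 1) {y : ℕ → A | y k = x k} := hcyl k {x k}
  -- sets inside `S_k` containing `x` are not null measurable
  have hkey : ∀ L (S : Set (ℕ → A)), Cyl L S → x ∈ S → S ⊆ {y | y k = x k} →
      μ S ≠ 0 := by
    intro L S hS hx hsub hz
    have h2 := ((hiff L S hS).2 (NullMeasurableSet.of_null hz)).mono_ac (dirac_ac hn x)
    obtain ⟨E, hES, hE, hxE⟩ := dirac_nullMeas hx h2
    rw [no_sub hk hE (hES.trans hsub)] at hxE
    exact hxE
  have h01 : ∀ B : Set A, MeasurableSet B → μ {y | y 0 ∈ B} = 0 ∨ μ {y | y 0 ∈ B} = 1 := by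
    intro B hB
    by_contra hcon
    push Not at hcon
    obtain ⟨hp0, hp1⟩ := hcon
    have hmB : ∀ B : Set A, MeasurableSet B → MeasurableSet {y : ℕ → A | y 0 ∈ B} :=
      fun B hB => (measurable_pi_apply 0) hB
    set p := μ.real {y : ℕ → A | y 0 ∈ B} with hp
    have hp0' : 0 < p := by
      refine lt_of_le_of_ne measureReal_nonneg fun e => hp0 ?_
      rwa [hp, eq_comm, measureReal_eq_zero_iff] at e
    have hp1' : p < 1 := by
      refine lt_of_le_of_ne measureReal_le_one fun e => hp1 ?_
      rw [← ofReal_measureReal (μ := μ) (s := {y : ℕ → A | y 0 ∈ B}), ← hp, e]; simp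
    have hpc : μ.real {y : ℕ → A | y 0 ∈ Bᶜ} = 1 - p := by
      have := probReal_compl_eq_one_sub (μ := μ) (hmB B hB)
      rw [hp, ← this]; rfl
    classical
    let D : ℕ → Set A := fun i => if x i ∈ B then B else Bᶜ
    have hxD : ∀ i, x i ∈ D i := by
      intro i; by_cases h : x i ∈ B <;> simp [D, h]
    have hDm : ∀ i, MeasurableSet (D i) := by
      intro i; by_cases h : x i ∈ B <;> simp [D, h, hB]
    have hDq : ∀ i, μ.real {y : ℕ → A | y 0 ∈ D i} ≤ max p (1 - p) := by
      intro i
      by_cases h : x i ∈ B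
      · simp only [D, h, if_true]; exact le_max_left _ _
      · simp only [D, h, if_false]; rw [hpc]; exact le_max_right _ _
    have hz : ∀ j, Tendsto (fun m => μ {y : ℕ → A | ∀ i < m, y i ∈ D (i + j)}) atTop (𝓝 0) :=
      fun j => zlem h0 h1 hC hinv hGCB (fun i => D (i + j))
        (fun i => (hmB _ (hDm _)).nullMeasurableSet) (max_lt hp1' (by linarith))
        (fun i => hDq _)
    have hsum := tendsto_finsetSum (Finset.range n) fun j _ => hz j
    simp only [Finset.sum_const_zero] at hsum
    apply hkey (k + 1) {y : ℕ → A | y k = x k} hcylk rfl subset_rfl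
    refine le_antisymm (ge_of_tendsto' hsum fun m => ?_) (zero_le)
    let E : Set (ℕ → A) := ⋃ j ∈ Finset.range n, {y : ℕ → A | ∀ i < m, y i ∈ D (i + j)}
    have hEm : MeasurableSet E := by
      refine Finset.measurableSet_biUnion _ fun j _ => ?_
      have : {y : ℕ → A | ∀ i < m, y i ∈ D (i + j)} =
          ⋂ i ∈ Finset.range m, (fun y : ℕ → A => y i) ⁻¹' D (i + j) := by
        ext y; simp
      rw [this]
      exact Finset.measurableSet_biInter _ fun i _ => (measurable_pi_apply i) (hDm _)
    have hEx : ∀ j < n, shift^[j] x ∈ E := by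
      intro j hj
      simp only [E, Set.mem_iUnion]
      refine ⟨j, Finset.mem_range.2 hj, fun i _ => ?_⟩
      rw [shift_iter]; exact hxD _
    have hnull : μ ({y : ℕ → A | y k = x k} \ E) = 0 := by
      have hc : Cyl (max (k + 1) m) ({y : ℕ → A | y k = x k} \ E) := by
        intro y z hyz hy
        refine ⟨hcylk y z (fun i hi => hyz i (lt_max_of_lt_left hi)) hy.1, fun hzE => hy.2 ?_⟩
        simp only [E, Set.mem_iUnion] at hzE ⊢
        obtain ⟨j, hj, hzj⟩ := hzE
        refine ⟨j, hj, fun i hi => ?_⟩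
        rw [hyz i (lt_max_of_lt_right hi)]
        exact hzj i hi
      have hnm := (hiff _ _ hc).1 (NullMeasurableSet.of_null
        (measure_mono_null (fun y hy => hy.2) (empMeas_null hEm hEx)))
      obtain ⟨F, hFS, hF, hae⟩ := hnm.exists_measurable_subset_ae_eq
      rw [← measure_congr hae, no_sub hk hF (hFS.trans Set.sdiff_subset), measure_empty]
    calc μ {y : ℕ → A | y k = x k} ≤ μ (({y : ℕ → A | y k = x k} \ E) ∪ E) :=
          measure_mono (by intro y hy; by_cases h : y ∈ E <;> simp [h]; exact hy)
      _ ≤ μ ({y : ℕ → A | y k = x k} \ E) + μ E := measure_union_le _ _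
      _ = μ E := by rw [hnull, zero_add]
      _ ≤ _ := measure_biUnion_finset_le _ _
  have hone : ∀ i (B : Set A), MeasurableSet B → x i ∈ B → ∀ l, μ {y | y l ∈ B}ᶜ = 0 := by
    intro i B hB hxB l
    have hmB : ∀ l, MeasurableSet {y : ℕ → A | y l ∈ B} := fun l => (measurable_pi_apply l) hB
    rw [prob_compl_eq_zero_iff (hmB l),
      (meas_coord hinv (hmB 0).nullMeasurableSet l).2]
    refine (h01 B hB).resolve_left fun hz => ?_
    have hc : Cyl (max (i + 1) (k + 1)) ({y : ℕ → A | y i ∈ B} ∩ {y | y k = x k}) := by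
      intro y z hyz hy
      exact ⟨hcyl i B y z (fun i hi => hyz i (lt_max_of_lt_left hi)) hy.1,
        hcylk y z (fun i hi => hyz i (lt_max_of_lt_right hi)) hy.2⟩
    refine hkey _ _ hc ⟨hxB, rfl⟩ Set.inter_subset_right ?_
    refine measure_mono_null Set.inter_subset_left ?_
    rw [(meas_coord hinv (hmB 0).nullMeasurableSet i).2, hz]
  have hd : ∀ j, Measure.dirac (shift^[j] x) = μ := by
    intro j
    refine (eq_dirac μ _ fun i B hB hz => ?_).symm
    rw [shift_iter] at hz
    exact hone _ B hB hz i
  simp only [empMeas, hd]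
  ext E hE
  simp only [Finset.sum_const, Finset.card_range, Measure.smul_apply, smul_eq_mul, nsmul_eq_mul]
  rw [← mul_assoc,
    ENNReal.inv_mul_cancel (by simp; omega) (by simp), one_mul]

lemma good_point {n : ℕ} (hn : 1 ≤ n) {x : ℕ → A} (hx : ∀ k, MeasurableSet ({x k} : Set A))
    (f : (ℕ → A) → ℝ) : AEStronglyMeasurable f (empMeas n x) ∧
      ∫ y, f y ∂(empMeas n x) = (n : ℝ)⁻¹ * ∑ i : Fin n, f (shift^[(i : ℕ)] x) := by
  have hae : ∀ j, f =ᵐ[Measure.dirac (shift^[j] x)] fun _ => f (shift^[j] x) := by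
    intro j
    have hm : MeasurableSet ({shift^[j] x} : Set (ℕ → A)) := by
      have : ({shift^[j] x} : Set (ℕ → A)) = ⋂ i, (fun y : ℕ → A => y i) ⁻¹' {x (i + j)} := by
        ext y
        simp only [Set.mem_singleton_iff, Set.mem_iInter, Set.mem_preimage]
        constructor
        · rintro rfl i; rw [shift_iter]
        · intro h; funext i; rw [h i, shift_iter]
      rw [this]
      exact MeasurableSet.iInter fun i => (measurable_pi_apply i) (hx _)
    have h0 : Measure.dirac (shift^[j] x) ({shift^[j] x} : Set (ℕ → A))ᶜ = 0 := by
      rw [Measure.dirac_apply' _ hm.compl]; simp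
    refine measure_mono_null ?_ h0
    intro y hy hyx
    apply hy
    rw [Set.mem_singleton_iff] at hyx
    show f y = f (shift^[j] x)
    rw [hyx]
  have hint : ∀ j ∈ Finset.range n, Integrable f (Measure.dirac (shift^[j] x)) := fun j _ =>
    (integrable_const _).congr (hae j).symm
  have hI : Integrable f (∑ j ∈ Finset.range n, Measure.dirac (shift^[j] x)) :=
    integrable_finsetSum_measure.2 hint
  refine ⟨hI.1.smul_measure _, ?_⟩
  rw [empMeas, integral_smul_measure, integral_finset_sum_measure hint]
  simp only [ENNReal.toReal_inv, ENNReal.toReal_natCast, smul_eq_mul]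
  congr 1
  rw [Finset.sum_range]
  refine Finset.sum_congr rfl fun i _ => ?_
  rw [integral_congr_ae (hae i)]
  simp

/-- The Kantorovich functional on `n` points. -/
def Kf (θ : ℝ) (μ : Measure (ℕ → A)) {n : ℕ} (X : Fin n → (ℕ → A)) : ℝ :=
  ⨆ f : {f : (ℕ → A) → ℝ // ∀ x y, |f x - f y| ≤ dtheta θ x y},
    ((n : ℝ)⁻¹ * ∑ i : Fin n, f.1 (X i)) - ∫ x, f.1 x ∂μ

lemma term_bound (h0 : 0 < θ) (h1 : θ < 1)
    {μ : Measure (ℕ → A)} [IsProbabilityMeasure μ]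
    (hall : ∀ f : (ℕ → A) → ℝ, LipT θ f → AEStronglyMeasurable f μ) {n : ℕ} (hn : 1 ≤ n)
    (X : Fin n → (ℕ → A)) (f : (ℕ → A) → ℝ) (hf : LipT θ f) :
    |((n : ℝ)⁻¹ * ∑ i : Fin n, f (X i)) - ∫ x, f x ∂μ| ≤ 1 := by
  have hn' : (0 : ℝ) < n := by exact_mod_cast hn
  have hp : ∀ x, |f x - ∫ y, f y ∂μ| ≤ 1 := by
    intro x
    have e : f x - ∫ y, f y ∂μ = ∫ y, (f x - f y) ∂μ := by
      rw [integral_sub (integrable_const _) (hf.integrable h0 h1 μ (hall f hf))]; simp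
    rw [e]
    have := norm_integral_le_of_norm_le_const (μ := μ) (f := fun y => f x - f y) (C := 1)
      (ae_of_all _ fun y => hf.bound h0 h1 x y)
    simpa using this
  have e : ((n : ℝ)⁻¹ * ∑ i : Fin n, f (X i)) - ∫ x, f x ∂μ =
      (n : ℝ)⁻¹ * ∑ i : Fin n, (f (X i) - ∫ x, f x ∂μ) := by
    rw [Finset.sum_sub_distrib, mul_sub]; simp; field_simp
  rw [e, abs_mul, abs_of_pos (inv_pos.2 hn'), inv_mul_le_iff₀ hn']
  refine (Finset.abs_sum_le_sum_abs _ _).trans ?_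
  refine (Finset.sum_le_sum (g := fun _ : Fin n => (1 : ℝ)) fun i _ => hp _).trans ?_
  simp

lemma Kf_diff (h0 : 0 < θ) (h1 : θ < 1)
    {μ : Measure (ℕ → A)} [IsProbabilityMeasure μ]
    (hall : ∀ f : (ℕ → A) → ℝ, LipT θ f → AEStronglyMeasurable f μ) {n : ℕ} (hn : 1 ≤ n)
    (X Y : Fin n → (ℕ → A)) :
    |Kf θ μ X - Kf θ μ Y| ≤ (n : ℝ)⁻¹ * ∑ i : Fin n, dtheta θ (X i) (Y i) := by
  have hn' : (0 : ℝ) < n := by exact_mod_cast hn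
  have hne : Nonempty {f : (ℕ → A) → ℝ // ∀ x y, |f x - f y| ≤ dtheta θ x y} :=
    ⟨⟨fun _ => 0, fun x y => by simpa using dtheta_nonneg h0 x y⟩⟩
  have hb : ∀ X : Fin n → (ℕ → A), BddAbove (Set.range fun
      f : {f : (ℕ → A) → ℝ // ∀ x y, |f x - f y| ≤ dtheta θ x y} =>
      ((n : ℝ)⁻¹ * ∑ i : Fin n, f.1 (X i)) - ∫ x, f.1 x ∂μ) := by
    intro X
    refine ⟨1, ?_⟩
    rintro _ ⟨f, rfl⟩
    exact (abs_le.1 (term_bound h0 h1 hall hn X f.1 f.2)).2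
  have hd : ∀ f : (ℕ → A) → ℝ, LipT θ f →
      |(n : ℝ)⁻¹ * ∑ i : Fin n, f (X i) - (n : ℝ)⁻¹ * ∑ i : Fin n, f (Y i)| ≤
      (n : ℝ)⁻¹ * ∑ i : Fin n, dtheta θ (X i) (Y i) := by
    intro f hf
    rw [← mul_sub, ← Finset.sum_sub_distrib, abs_mul, abs_of_pos (inv_pos.2 hn')]
    refine mul_le_mul_of_nonneg_left ?_ (inv_pos.2 hn').le
    exact (Finset.abs_sum_le_sum_abs _ _).trans (Finset.sum_le_sum fun i _ => hf _ _)
  rw [abs_le]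
  constructor
  · rw [neg_le_sub_iff_le_add]
    refine ciSup_le fun f => ?_
    have := le_ciSup (hb X) f
    have h3 := abs_le.1 (hd f.1 f.2)
    change _ ≤ Kf θ μ X at this
    linarith [h3.1]
  · rw [sub_le_iff_le_add]
    refine ciSup_le fun f => ?_
    have := le_ciSup (hb Y) f
    have h3 := abs_le.1 (hd f.1 f.2)
    change _ ≤ Kf θ μ Y at this
    linarith [h3.2]

lemma Kf_bound (h0 : 0 < θ) (h1 : θ < 1)
    {μ : Measure (ℕ → A)} [IsProbabilityMeasure μ]
    (hall : ∀ f : (ℕ → A) → ℝ, LipT θ f → AEStronglyMeasurable f μ) {n : ℕ} (hn : 1 ≤ n)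
    (X : Fin n → (ℕ → A)) : |Kf θ μ X| ≤ 1 := by
  have hne : Nonempty {f : (ℕ → A) → ℝ // ∀ x y, |f x - f y| ≤ dtheta θ x y} :=
    ⟨⟨fun _ => 0, fun x y => by simpa using dtheta_nonneg h0 x y⟩⟩
  rw [abs_le]
  constructor
  · obtain ⟨f⟩ := hne
    refine (abs_le.1 (term_bound h0 h1 hall hn X f.1 f.2)).1.trans ?_
    refine le_ciSup (f := fun
      f : {f : (ℕ → A) → ℝ // ∀ x y, |f x - f y| ≤ dtheta θ x y} =>
      ((n : ℝ)⁻¹ * ∑ i : Fin n, f.1 (X i)) - ∫ x, f.1 x ∂μ) ⟨1, ?_⟩ f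
    rintro _ ⟨f, rfl⟩
    exact (abs_le.1 (term_bound h0 h1 hall hn X f.1 f.2)).2
  · exact ciSup_le fun f => (abs_le.1 (term_bound h0 h1 hall hn X f.1 f.2)).2

lemma conc (h0 : 0 < θ) (h1 : θ < 1) {C : ℝ} (hC : 0 < C)
    {μ : Measure (ℕ → A)} [IsProbabilityMeasure μ] (hGCB : GCB θ C μ)
    (hall : ∀ f : (ℕ → A) → ℝ, LipT θ f → AEStronglyMeasurable f μ) {n : ℕ} (hn : 1 ≤ n)
    {u : ℝ} (hu : 0 < u) (F : (ℕ → A) → ℝ)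
    (hF : F = fun x => Kf θ μ (fun i : Fin n => shift^[(i : ℕ)] x)) :
    μ {x | |F x - ∫ y, F y ∂μ| ≥ u} ≤
      ENNReal.ofReal (2 * Real.exp (-((n : ℝ) * u ^ 2) / (4 * C))) := by
  have hn' : (0 : ℝ) < n := by exact_mod_cast hn
  have hFb : ∀ x, |F x| ≤ 1 := fun x => by rw [hF]; exact Kf_bound h0 h1 hall hn _
  have hFm : AEStronglyMeasurable F μ := by
    set c : ℝ := (n : ℝ)⁻¹ * ∑ i : Fin n, (θ⁻¹) ^ (i : ℕ) with hc
    have hne : Nonempty (Fin n) := ⟨⟨0, hn⟩⟩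
    have hcpos : 0 < c := mul_pos (inv_pos.2 hn')
      (Finset.sum_pos (fun i _ => by positivity) Finset.univ_nonempty)
    have hl : LipT θ (fun x => c⁻¹ * F x) := by
      intro x y
      rw [← mul_sub, abs_mul, abs_of_pos (inv_pos.2 hcpos), inv_mul_le_iff₀ hcpos]
      rw [hF]
      refine (Kf_diff h0 h1 hall hn _ _).trans ?_
      rw [hc, mul_assoc, Finset.sum_mul]
      refine mul_le_mul_of_nonneg_left ?_ (inv_pos.2 hn').le
      exact Finset.sum_le_sum fun i _ => dtheta_shift_iter h0 h1 x y i
    refine ((hall _ hl).const_mul c).congr (ae_of_all _ fun x => ?_)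
    simp only []
    field_simp
  have hexp : ∀ s : ℝ, Integrable (fun y => Real.exp (s * F y)) μ := by
    intro s
    refine Integrable.of_bound
      (Real.continuous_exp.comp_aestronglyMeasurable (hFm.const_mul s)) (Real.exp |s|)
      (ae_of_all _ fun y => ?_)
    rw [Real.norm_eq_abs, abs_of_pos (Real.exp_pos _), Real.exp_le_exp]
    refine (le_abs_self _).trans ?_
    rw [abs_mul]
    exact mul_le_of_le_one_right (abs_nonneg _) (hFb y)
  have hmgf : ∀ s : ℝ, mgf F μ s ≤ Real.exp (s * ∫ y, F y ∂μ) * Real.exp (C * (s ^ 2 / n)) := by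
    intro s
    have hsep : SepLip θ (fun X : Fin n → (ℕ → A) => s * Kf θ μ X) (fun _ => |s| / n) := by
      intro X i x'
      rw [← mul_sub, abs_mul, div_eq_mul_inv, mul_assoc]
      refine mul_le_mul_of_nonneg_left ?_ (abs_nonneg s)
      refine (Kf_diff h0 h1 hall hn _ _).trans ?_
      refine mul_le_mul_of_nonneg_left (le_of_eq ?_) (inv_pos.2 hn').le
      rw [Finset.sum_eq_single i]
      · simp
      · intro b _ hb; rw [Function.update_of_ne hb, dtheta_self]
      · simp
    have hg := hGCB n hn _ _ hsep
    have e : C * ∑ j : Fin n, (|s| / n) ^ 2 = C * (s ^ 2 / n) := by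
      simp only [Finset.sum_const, Finset.card_univ, Fintype.card_fin, nsmul_eq_mul, div_pow,
        sq_abs]
      field_simp
    rw [e, integral_const_mul] at hg
    simpa [mgf, hF] using hg
  set m := ∫ y, F y ∂μ with hm
  set t : ℝ := n * u / (2 * C) with ht
  have ht0 : 0 ≤ t := by positivity
  have hup : μ.real {x | m + u ≤ F x} ≤ Real.exp (-((n : ℝ) * u ^ 2) / (4 * C)) := by
    refine (measure_ge_le_exp_mul_mgf (m + u) ht0 (hexp t)).trans ?_
    refine (mul_le_mul_of_nonneg_left (hmgf t) (Real.exp_pos _).le).trans ?_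
    rw [← Real.exp_add, ← Real.exp_add, Real.exp_le_exp, ht]
    apply le_of_eq
    field_simp
    ring
  have hlo : μ.real {x | F x ≤ m - u} ≤ Real.exp (-((n : ℝ) * u ^ 2) / (4 * C)) := by
    refine (measure_le_le_exp_mul_mgf (m - u) (neg_nonpos.2 ht0) (hexp (-t))).trans ?_
    refine (mul_le_mul_of_nonneg_left (hmgf (-t)) (Real.exp_pos _).le).trans ?_
    rw [← Real.exp_add, ← Real.exp_add, Real.exp_le_exp, ht]
    apply le_of_eq
    field_simp
    ring
  rw [← ofReal_measureReal]
  apply ENNReal.ofReal_le_ofReal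
  have hsub : {x | |F x - m| ≥ u} ⊆ {x | m + u ≤ F x} ∪ {x | F x ≤ m - u} := by
    intro x hx
    rcases le_abs.1 (show u ≤ |F x - m| from hx) with h | h
    · left; show m + u ≤ F x; linarith
    · right; show F x ≤ m - u; linarith
  refine (measureReal_mono hsub).trans ((measureReal_union_le _ _).trans ?_)
  linarith

end Aux

/-- concentration of the Kantorovich distance between the empirical measure
and the invariant measure. -/
theorem stmt9 {A : Type*} [MeasurableSpace A]
    (θ : ℝ) (hθ0 : 0 < θ) (hθ1 : θ < 1) (C : ℝ) (hC : 0 < C)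
    (μ : Measure (ℕ → A)) [IsProbabilityMeasure μ]
    (hinv : MeasurePreserving shift μ μ) (hGCB : GCB θ C μ)
    (u : ℝ) (hu : 0 < u) (n : ℕ) (hn : 1 ≤ n) :
    μ {x : ℕ → A |
        |dKant θ (empMeas n x) μ - ∫ y, dKant θ (empMeas n y) μ ∂μ| ≥ u} ≤
      ENNReal.ofReal (2 * Real.exp (-((n : ℝ) * u ^ 2) / (4 * C))) := by
  haveI : NeZero n := ⟨by omega⟩
  by_cases hall : ∀ f : (ℕ → A) → ℝ, LipT θ f → AEStronglyMeasurable f μ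
  · -- every Lipschitz function is measurable
    have hcylnm : ∀ L (S : Set (ℕ → A)), Cyl L S → NullMeasurableSet S μ := fun L S hS =>
      (LipT.measurable_iff hθ0 L μ).1 (hall _ (hS.lip hθ0 hθ1))
    have hbad : ∀ x : ℕ → A, (¬ ∀ k, MeasurableSet ({x k} : Set A)) →
        dKant θ (empMeas n x) μ = 0 := by
      intro x hx
      push Not at hx
      obtain ⟨k, hk⟩ := hx
      have hc : Cyl (k + 1) {y : ℕ → A | y k = x k} := by
        intro y z hyz hy
        exact (hyz k (Nat.lt_succ_self k)).symm.trans hy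
      refine junk hθ0 hθ1 (hc.lip hθ0 hθ1) _ _ fun hiff => ?_
      rw [LipT.measurable_iff hθ0, LipT.measurable_iff hθ0] at hiff
      have h2 := (hiff.2 (hcylnm _ _ hc)).mono_ac (dirac_ac hn x)
      obtain ⟨E, hES, hE, hxE⟩ := dirac_nullMeas (show x ∈ {y : ℕ → A | y k = x k} from rfl) h2
      rw [no_sub hk hE hES] at hxE
      exact hxE
    let As : Set A := {a | MeasurableSet ({a} : Set A)}
    have hAs : NullMeasurableSet {y : ℕ → A | y 0 ∈ As} μ := by
      refine hcylnm 1 _ fun y z hyz hy => ?_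
      have := hyz 0 Nat.one_pos
      simpa [← this] using hy
    by_cases hp : μ {y : ℕ → A | y 0 ∈ As} = 1
    · -- almost every point is good
      have hae : ∀ᵐ x ∂μ, ∀ k, MeasurableSet ({x k} : Set A) := by
        rw [ae_all_iff]
        intro k
        have h3 := meas_coord hinv hAs k
        rw [hp] at h3
        exact (prob_compl_eq_zero_iff₀ h3.1).2 h3.2
      let F : (ℕ → A) → ℝ := fun x => Kf θ μ (fun i : Fin n => shift^[(i : ℕ)] x)
      have hFF : ∀ᵐ x ∂μ, dKant θ (empMeas n x) μ = F x := by
        filter_upwards [hae] with x hx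
        simp only [dKant, F, Kf]
        congr 1
        funext f
        rw [(good_point hn hx f.1).2]
      rw [integral_congr_ae hFF]
      refine le_trans (le_of_eq (measure_congr ?_)) (conc hθ0 hθ1 hC hGCB hall hn hu F rfl)
      filter_upwards [hFF] with x hx
      apply propext
      show |_ - _| ≥ u ↔ |_ - _| ≥ u
      rw [hx]
    · -- almost every point is bad
      have hq : μ.real {y : ℕ → A | y 0 ∈ As} < 1 := by
        refine lt_of_le_of_ne measureReal_le_one fun e => hp ?_
        rw [← ofReal_measureReal (μ := μ) (s := {y : ℕ → A | y 0 ∈ As}), e]; simp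
      have hz := zlem hθ0 hθ1 hC hinv hGCB (fun _ => As) (fun _ => hAs) hq (fun _ => le_rfl)
      have hnull : μ {x : ℕ → A | ∀ k, MeasurableSet ({x k} : Set A)} = 0 := by
        refine le_antisymm (ge_of_tendsto' hz fun m => measure_mono ?_) zero_le
        intro x hx i _
        exact hx i
      have hae : ∀ᵐ x ∂μ, dKant θ (empMeas n x) μ = 0 := by
        refine measure_mono_null ?_ hnull
        intro x hx
        by_contra hcon
        exact hx (hbad x hcon)
      rw [integral_congr_ae hae]
      refine le_trans (le_of_eq ?_) zero_le
      refine measure_mono_null ?_ hae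
      intro x hx hx0
      have hx0' : dKant θ (empMeas n x) μ = 0 := hx0
      rw [Set.mem_setOf_eq, hx0'] at hx
      simp at hx
      linarith
  · -- some Lipschitz function is not measurable
    push Not at hall
    obtain ⟨f, hf, hfm⟩ := hall
    have hzero : ∀ x : ℕ → A, dKant θ (empMeas n x) μ = 0 := by
      intro x
      by_contra hne
      have hiff : ∀ g : (ℕ → A) → ℝ, LipT θ g →
          (AEStronglyMeasurable g (empMeas n x) ↔ AEStronglyMeasurable g μ) := by
        intro g hg
        by_contra hcon
        exact hne (junk hθ0 hθ1 hg _ _ hcon)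
      have hk : ∃ k, ¬ MeasurableSet ({x k} : Set A) := by
        by_contra hcon
        push Not at hcon
        exact hfm ((hiff f hf).1 (good_point hn hcon f).1)
      obtain ⟨k, hk⟩ := hk
      have heq := caseA hθ0 hθ1 hC hinv hGCB hn x (fun L S hS => by
        have := hiff _ (hS.lip hθ0 hθ1)
        rwa [LipT.measurable_iff hθ0, LipT.measurable_iff hθ0] at this) k hk
      apply hne
      rw [heq]
      simp [dKant]
    have : {x : ℕ → A | |dKant θ (empMeas n x) μ - ∫ y, dKant θ (empMeas n y) μ ∂μ| ≥ u} = ∅ := by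
      ext x
      simp [hzero, hu]
    rw [this]
    simp
end
end
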